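/- arXiv:2404.14972 — 2 statements merged into one kernel-verified Lean document; each statement's English description precedes it below -/
import Mathlib

section
/- Let H be a Hamiltonian pattern of size k (i.e. a graph on [k] which, after relabelling vertices, contains the Hamiltonian cycle with edges (1,2),(2,3),…,(k−1,k),(k,1)), let ⋆ ∈ {ind, sub}, and assume k > 2/(3−τ) and k is odd. Then the vector with α_i = 1/2 for all i and β_{ij} = 0 for all i < j is an optimal solution of the corresponding optimization problem, and there exists a constant I_N^⋆(H) ∈ (0,∞), depending on the parameters of the GIRG, such that N^⋆(H)/n^{k(3−τ)/2} converges in probability to I_N^⋆(H) as n → ∞. -/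
open MeasureTheory Filter Finset

noncomputable section

instance : Fact ((0:ℝ) < 1) := ⟨one_pos⟩

/-- The `d`-dimensional torus `ℝ^d/ℤ^d`, with the sup of coordinatewise circle distances. -/
abbrev Torus (d : ℕ) := Fin d → AddCircle (1 : ℝ)

/-- Sample space of the GIRG on `n` vertices: weights, positions, and iid uniform
`[0,1]` coins deciding the presence of each potential edge. -/
abbrev GirgΩ (d n : ℕ) := (Fin n → ℝ) × (Fin n → Torus d) × (Sym2 (Fin n) → ℝ)

/-- The law of the randomness of the GIRG: iid weights with law `μW`, iid uniform positions
on the torus, iid uniform coins. -/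
def girgMeasure (μW : Measure ℝ) (d n : ℕ) : Measure (GirgΩ d n) :=
  (Measure.pi fun _ : Fin n => μW).prod
    ((Measure.pi fun _ : Fin n => (volume : Measure (Torus d))).prod
      (Measure.pi fun _ : Sym2 (Fin n) => volume.restrict (Set.Icc (0:ℝ) 1)))

/-- mean `μ = E[W]` of the weight distribution -/
def wMean (μW : Measure ℝ) : ℝ := ∫ x, x ∂μW

/-- Power-law tail assumption: `W ≥ 1` a.s. and `P(W > x) = c x^{1-τ} (1+o(1))` as `x → ∞`. -/
def WeightTail (τ c : ℝ) (μW : Measure ℝ) : Prop :=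
  0 < c ∧ μW (Set.Iio 1) = 0 ∧
    Tendsto (fun x : ℝ => (μW (Set.Ioi x)).toReal / (c * x ^ (1 - τ))) atTop (nhds 1)

/-- GIRG connection probability `min(1, (w_u w_v / (n μ ‖x_u - x_v‖^d))^γ)`. -/
def connProb (γ μbar : ℝ) (d n : ℕ) (w : Fin n → ℝ) (x : Fin n → Torus d)
    (u v : Fin n) : ℝ :=
  min 1 ((w u * w v / ((n : ℝ) * μbar * dist (x u) (x v) ^ d)) ^ γ)

/-- `u` and `v` are joined by an edge of the GIRG in outcome `ω`. -/
def girgEdge (γ μbar : ℝ) (d n : ℕ) (ω : GirgΩ d n) (u v : Fin n) : Prop :=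
  u ≠ v ∧ ω.2.2 s(u, v) ≤ connProb γ μbar d n ω.1 ω.2.1 u v

/-- the window `[ε t, t/ε]` -/
def windowIcc (ε t : ℝ) : Set ℝ := Set.Icc (ε * t) (t / ε)

/-- The set `M_ε^{(α,β)}` of ordered `k`-tuples of distinct vertices with prescribed
weights and inter-distances. -/
def Mset {k : ℕ} (ε : ℝ) (α : Fin k → ℝ) (β : Fin k → Fin k → ℝ) (d n : ℕ)
    (w : Fin n → ℝ) (x : Fin n → Torus d) : Set (Fin k → Fin n) :=
  {v | Function.Injective v ∧
    (∀ i, w (v i) ∈ windowIcc ε ((n : ℝ) ^ (α i))) ∧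
    (∀ i j : Fin k, i < j → dist (x (v i)) (x (v j)) ∈ windowIcc ε ((n : ℝ) ^ (β i j)))}

/-- `N^{sub}(H; M_ε^{(α,β)})` -/
def nSubM {k : ℕ} (H : SimpleGraph (Fin k)) (γ μbar ε : ℝ) (α : Fin k → ℝ)
    (β : Fin k → Fin k → ℝ) (d n : ℕ) (ω : GirgΩ d n) : ℕ :=
  Set.ncard {v : Fin k → Fin n | v ∈ Mset ε α β d n ω.1 ω.2.1 ∧
    ∀ i j : Fin k, H.Adj i j → girgEdge γ μbar d n ω (v i) (v j)}

/-- `N^{ind}(H; M_ε^{(α,β)})` -/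
def nIndM {k : ℕ} (H : SimpleGraph (Fin k)) (γ μbar ε : ℝ) (α : Fin k → ℝ)
    (β : Fin k → Fin k → ℝ) (d n : ℕ) (ω : GirgΩ d n) : ℕ :=
  Set.ncard {v : Fin k → Fin n | v ∈ Mset ε α β d n ω.1 ω.2.1 ∧
    ∀ i j : Fin k, i ≠ j → (H.Adj i j ↔ girgEdge γ μbar d n ω (v i) (v j))}

/-- `N^{sub}(H)` -/
def nSubTotal {k : ℕ} (H : SimpleGraph (Fin k)) (γ μbar : ℝ) (d n : ℕ)
    (ω : GirgΩ d n) : ℕ :=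
  Set.ncard {v : Fin k → Fin n | Function.Injective v ∧
    ∀ i j : Fin k, H.Adj i j → girgEdge γ μbar d n ω (v i) (v j)}

/-- `N^{ind}(H)` -/
def nIndTotal {k : ℕ} (H : SimpleGraph (Fin k)) (γ μbar : ℝ) (d n : ℕ)
    (ω : GirgΩ d n) : ℕ :=
  Set.ncard {v : Fin k → Fin n | Function.Injective v ∧
    ∀ i j : Fin k, i ≠ j → (H.Adj i j ↔ girgEdge γ μbar d n ω (v i) (v j))}

/-- `β` read as a symmetric matrix (only entries with `i < j` are meaningful). -/
def bsym {k : ℕ} (β : Fin k → Fin k → ℝ) (i j : Fin k) : ℝ := if i < j then β i j else β j i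

/-- The feasible region `F`. -/
def Feasible (τ : ℝ) (d : ℕ) {k : ℕ} (α : Fin k → ℝ) (β : Fin k → Fin k → ℝ) : Prop :=
  (∀ i, α i ∈ Set.Icc (0 : ℝ) (1 / (τ - 1))) ∧
  (∀ i j : Fin k, i < j → β i j ∈ Set.Icc (-(1 / (d : ℝ))) 0) ∧
  (∀ i j s : Fin k, i < j → s ≠ i → s ≠ j → β i j ≤ max (bsym β i s) (bsym β j s))

/-- `min_{i<j} β_{ij}` (with value `0 = sInf ∅` for the first vertex `j`,
which does not contribute). -/
def minBeta {k : ℕ} (β : Fin k → Fin k → ℝ) (j : Fin k) : ℝ :=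
  sInf {x : ℝ | ∃ i, i < j ∧ x = β i j}

open scoped Classical in
/-- The exponent `f_H(α,β)`. -/
def fExp (τ γ : ℝ) (d : ℕ) {k : ℕ} (H : SimpleGraph (Fin k))
    (α : Fin k → ℝ) (β : Fin k → Fin k → ℝ) : ℝ :=
  (k : ℝ) + (1 - τ) * ∑ i, α i + (d : ℝ) * ∑ j, minBeta β j +
    γ * ∑ p ∈ Finset.univ.filter (fun p : Fin k × Fin k => p.1 < p.2 ∧ H.Adj p.1 p.2),
        min (α p.1 + α p.2 - (d : ℝ) * β p.1 p.2 - 1) 0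

/-- Extra constraints for the induced optimization problem:
`α_i + α_j ≤ 1 + d β_{ij}` for all non-edges. -/
def IndConstr (d : ℕ) {k : ℕ} (H : SimpleGraph (Fin k)) (α : Fin k → ℝ)
    (β : Fin k → Fin k → ℝ) : Prop :=
  ∀ i j : Fin k, i < j → ¬H.Adj i j → α i + α j ≤ 1 + (d : ℝ) * β i j

/-- `(α,β)` is an optimal solution of the general optimization problem. -/
def IsOptimalSub (τ γ : ℝ) (d : ℕ) {k : ℕ} (H : SimpleGraph (Fin k))
    (α : Fin k → ℝ) (β : Fin k → Fin k → ℝ) : Prop :=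
  Feasible τ d α β ∧
    ∀ α' β', Feasible τ d α' β' → fExp τ γ d H α' β' ≤ fExp τ γ d H α β

/-- `(α,β)` is an optimal solution of the induced optimization problem. -/
def IsOptimalInd (τ γ : ℝ) (d : ℕ) {k : ℕ} (H : SimpleGraph (Fin k))
    (α : Fin k → ℝ) (β : Fin k → Fin k → ℝ) : Prop :=
  Feasible τ d α β ∧ IndConstr d H α β ∧
    ∀ α' β', Feasible τ d α' β' → IndConstr d H α' β' →
      fExp τ γ d H α' β' ≤ fExp τ γ d H α β

/-- the two kinds of subgraph counts -/
inductive StarKind | ind | sub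

/-- `N^⋆(H; M_ε^{(α,β)})` -/
def starNM (s : StarKind) {k : ℕ} (H : SimpleGraph (Fin k)) (γ μbar ε : ℝ) (α : Fin k → ℝ)
    (β : Fin k → Fin k → ℝ) (d n : ℕ) (ω : GirgΩ d n) : ℕ :=
  match s with
  | .sub => nSubM H γ μbar ε α β d n ω
  | .ind => nIndM H γ μbar ε α β d n ω

/-- `N^⋆(H)` -/
def starNTotal (s : StarKind) {k : ℕ} (H : SimpleGraph (Fin k)) (γ μbar : ℝ) (d n : ℕ)
    (ω : GirgΩ d n) : ℕ :=
  match s with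
  | .sub => nSubTotal H γ μbar d n ω
  | .ind => nIndTotal H γ μbar d n ω

/-- optimality in the optimization problem corresponding to `⋆` -/
def starIsOptimal (s : StarKind) (τ γ : ℝ) (d : ℕ) {k : ℕ} (H : SimpleGraph (Fin k))
    (α : Fin k → ℝ) (β : Fin k → Fin k → ℝ) : Prop :=
  match s with
  | .sub => IsOptimalSub τ γ d H α β
  | .ind => IsOptimalInd τ γ d H α β

/-- the optimal value `f_H^*` of the optimization problem corresponding to `⋆` -/
def starOptVal (s : StarKind) (τ γ : ℝ) (d : ℕ) {k : ℕ} (H : SimpleGraph (Fin k)) : ℝ :=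
  match s with
  | .sub => sSup {x | ∃ α β, Feasible τ d α β ∧ x = fExp τ γ d H α β}
  | .ind => sSup {x | ∃ α β, Feasible τ d α β ∧ IndConstr d H α β ∧ x = fExp τ γ d H α β}

/-- `(α,β)` is the unique optimal solution (in the `α`-variables and the
`β`-variables with `i < j`). -/
def UniquelyOptimal (s : StarKind) (τ γ : ℝ) (d : ℕ) {k : ℕ} (H : SimpleGraph (Fin k))
    (α : Fin k → ℝ) (β : Fin k → Fin k → ℝ) : Prop :=
  starIsOptimal s τ γ d H α β ∧
    ∀ α' β', starIsOptimal s τ γ d H α' β' →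
      α' = α ∧ ∀ i j : Fin k, i < j → β' i j = β i j


/-- `H` is a Hamiltonian pattern: after relabelling the vertices it contains the
Hamiltonian cycle `(1,2),(2,3),…,(k-1,k),(k,1)`. -/
def IsHamiltonianPattern {k : ℕ} [NeZero k] (H : SimpleGraph (Fin k)) : Prop :=
  ∃ σ : Equiv.Perm (Fin k), ∀ i : Fin k, H.Adj (σ i) (σ (i + 1))


def pathSum {V : Type*} (y : V → V → ℝ) : List V → ℝ
  | [] => 0
  | [_] => 0
  | a :: b :: l => y a b + pathSum y (b :: l)

lemma pathSum_remove {V : Type*} (y : V → V → ℝ) (hs : ∀ i j, y i j = y j i)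
    (hu : ∀ i j s, i ≠ j → s ≠ i → s ≠ j → y i j ≤ max (y i s) (y j s)) (x : V) (m : ℝ) (hm0 : m ≤ 0)
    (l1 l2 : List V) (hn : (l1 ++ x :: l2).Nodup) (hm : ∀ z ∈ l1 ++ l2, m ≤ y x z) :
    pathSum y (l1 ++ l2) + m ≤ pathSum y (l1 ++ x :: l2) := by
  induction l1 with
  | nil =>
    cases l2 with
    | nil => simpa [pathSum] using hm0
    | cons b l2 =>
      have := hm b (by simp)
      simp only [List.nil_append, pathSum]; linarith
  | cons a l1 ih =>
    cases l1 with
    | nil =>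
      have ha := hm a (by simp)
      cases l2 with
      | nil => simp [pathSum]; rw [hs]; exact ha
      | cons b l2 =>
        have hb := hm b (by simp)
        simp only [List.cons_append, List.nil_append, pathSum]
        simp only [List.cons_append, List.nil_append, List.nodup_cons, List.mem_cons, not_or] at hn
        have h1 := hu a b x hn.1.2.1 (fun h => hn.1.1 h.symm) hn.2.1.1
        have h2 := hs a x
        have h3 := hs b x
        rcases max_cases (y a x) (y b x) with ⟨h, _⟩ | ⟨h, _⟩ <;> linarith
    | cons b l1 =>
      simp only [List.cons_append, pathSum] at ih ⊢
      have := ih (by simp only [List.cons_append] at hn; exact hn.of_cons) (fun z hz => hm z (by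
        simp only [List.cons_append, List.mem_cons] at hz ⊢; right; exact hz))
      linarith

lemma pathSum_ge {k : ℕ} (y : Fin k → Fin k → ℝ) (hs : ∀ i j, y i j = y j i)
    (hu : ∀ i j s, i ≠ j → s ≠ i → s ≠ j → y i j ≤ max (y i s) (y j s)) (M : Fin k → ℝ)
    (hM0 : ∀ j, M j ≤ 0) (hM : ∀ i j, i < j → M j ≤ y i j) (N : ℕ) :
    ∀ l : List (Fin k), l.length = N → l.Nodup → (l.map M).sum ≤ pathSum y l := by
  induction N with
  | zero => intro l hl _; rw [List.length_eq_zero_iff.1 hl]; simp [pathSum]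
  | succ N ih =>
    intro l hl hn
    have hne : l.toFinset.Nonempty := by
      cases l with
      | nil => simp at hl
      | cons a l => exact ⟨a, by simp⟩
    obtain ⟨x, hx, hmax⟩ := Finset.exists_max_image l.toFinset id hne
    rw [List.mem_toFinset] at hx
    obtain ⟨l1, l2, rfl⟩ := List.append_of_mem hx
    have hn2 : (x :: (l1 ++ l2)).Nodup := (List.perm_middle.nodup_iff).1 hn
    have h1 := ih (l1 ++ l2) (by simp at hl ⊢; omega) hn2.of_cons
    have h2 := pathSum_remove y hs hu x (M x) (hM0 x) l1 l2 hn (fun z hz => by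
      rw [hs]
      apply hM
      have : z ≤ x := hmax z (by simp at hz ⊢; tauto)
      refine lt_of_le_of_ne this ?_
      rintro rfl
      exact (List.nodup_cons.1 hn2).1 hz)
    simp at h1 ⊢
    linarith

lemma pathSum_ofFn {V : Type*} (y : V → V → ℝ) (m : ℕ) (g : Fin (m+1) → V) :
    pathSum y (List.ofFn g) = ∑ j : Fin m, y (g j.castSucc) (g j.succ) := by
  induction m with
  | zero => simp [pathSum]
  | succ m ih =>
    rw [List.ofFn_succ]
    have h2 := ih (fun i => g i.succ)
    rw [List.ofFn_succ] at h2 ⊢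
    simp only [pathSum]
    rw [h2, Fin.sum_univ_succ]
    rfl

lemma bsym_symm {k : ℕ} (β : Fin k → Fin k → ℝ) (i j : Fin k) : bsym β i j = bsym β j i := by
  unfold bsym
  rcases lt_trichotomy i j with h | h | h
  · simp [h, h.not_gt]
  · simp [h]
  · simp [h, h.not_gt]

def rotEquiv {m : ℕ} (e : Fin (m+1)) : Fin (m+1) ≃ Fin (m+1) := Equiv.addLeft (e + 1)

lemma rot_last {m : ℕ} (e : Fin (m+1)) : rotEquiv e (Fin.last m) = e := by
  have : (1 : Fin (m+1)) + Fin.last m = 0 := by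
    rw [add_comm (1 : Fin (m+1))]; exact Fin.last_add_one m
  simp only [rotEquiv, Equiv.coe_addLeft, add_assoc, this, add_zero]

lemma rot_succ {m : ℕ} (e : Fin (m+1)) (j : Fin m) :
    rotEquiv e j.succ = rotEquiv e j.castSucc + 1 := by
  simp only [rotEquiv, Equiv.coe_addLeft, add_assoc]
  congr 2
  rw [Fin.coeSucc_eq_succ]

lemma opt_bound {k : ℕ} [NeZero k] {d : ℕ} (hd : 1 ≤ d) (τ γ : ℝ) (hτ : τ ∈ Set.Ioo (2:ℝ) 3)
    (hγ : 1 < γ) (H : SimpleGraph (Fin k)) (σ : Equiv.Perm (Fin k))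
    (hH : ∀ i : Fin k, H.Adj (σ i) (σ (i + 1)))
    (hinj : Function.Injective (fun i : Fin k => s(σ i, σ (i+1))))
    (hk : 2 / (3 - τ) < (k : ℝ)) (α : Fin k → ℝ) (β : Fin k → Fin k → ℝ)
    (hF : Feasible τ d α β) : fExp τ γ d H α β ≤ (k:ℝ) * (3 - τ) / 2 := by
  classical
  obtain ⟨hα, hβ, hult⟩ := hF
  obtain ⟨hτ1, hτ2⟩ := hτ
  have hbd : ∀ i j : Fin k, i < j → minBeta β j ≤ β i j := by
    intro i j hij
    refine csInf_le ⟨-(1/(d:ℝ)), ?_⟩ ⟨i, hij, rfl⟩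
    rintro x ⟨i', hi', rfl⟩
    exact (hβ i' j hi').1
  have hb0 : ∀ j, minBeta β j ≤ 0 := by
    intro j
    refine Real.sInf_nonpos ?_
    rintro x ⟨i', hi', rfl⟩
    exact (hβ i' j hi').2
  have hd0 : (0:ℝ) < d := by exact_mod_cast hd
  set y : Fin k → ℝ := fun i => bsym β (σ i) (σ (i+1)) with hy
  set T : ℝ := ∑ j, minBeta β j with hT
  -- spanning path bound
  have hpath : ∀ e : Fin k, T ≤ ∑ i, y i - y e := by
    obtain ⟨m, rfl⟩ : ∃ m, k = m + 1 := ⟨k - 1, by have := NeZero.pos k; omega⟩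
    intro e
    have h := pathSum_ge (bsym β) (bsym_symm β) (by
      intro i j s hij hsi hsj
      rcases lt_or_gt_of_ne hij with h | h
      · have := hult i j s h hsi hsj
        rw [show bsym β i j = β i j by simp [bsym, h]]; exact this
      · have := hult j i s h hsj hsi
        rw [show bsym β i j = β j i by simp [bsym, h.not_gt], max_comm]; exact this)
      (minBeta β) hb0 (by
        intro i j hij
        rw [show bsym β i j = β i j by simp [bsym, hij]]; exact hbd i j hij) (m+1)
      (List.ofFn (fun j => σ (rotEquiv e j))) (by simp)
      (List.nodup_ofFn.2 (σ.injective.comp (rotEquiv e).injective))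
    rw [pathSum_ofFn, List.map_ofFn, List.sum_ofFn] at h
    have h1 : ∑ j, (minBeta β ∘ fun j => σ (rotEquiv e j)) j = T := by
      rw [hT]
      exact Equiv.sum_comp ((rotEquiv e).trans σ) (minBeta β)
    rw [h1] at h
    have h2 : ∑ i, y i = ∑ j : Fin m, y (rotEquiv e j.castSucc) + y e := by
      rw [← Equiv.sum_comp (rotEquiv e) y, Fin.sum_univ_castSucc, rot_last]
    rw [h2]
    simp only [rot_succ] at h
    simp only [hy]
    linarith
  set Y := ∑ i, y i with hY
  have hsumT : (k:ℝ) * T ≤ (k:ℝ) * Y - Y := by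
    have := Finset.sum_le_sum (fun e (_ : e ∈ Finset.univ) => hpath e)
    simp at this
    linarith
  -- edge terms
  set g : Fin k → Fin k → ℝ := fun i j => min (α i + α j - d * bsym β i j - 1) 0 with hg
  have hgs : ∀ i j, g i j = g j i := by
    intro i j; simp only [hg]; rw [bsym_symm β i j, add_comm (α i)]
  have hE : ∑ p ∈ Finset.univ.filter (fun p : Fin k × Fin k => p.1 < p.2 ∧ H.Adj p.1 p.2),
        min (α p.1 + α p.2 - (d : ℝ) * β p.1 p.2 - 1) 0 ≤ ∑ i, g (σ i) (σ (i+1)) := by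
    set φ : Fin k → Fin k × Fin k := fun i =>
      if σ i < σ (i+1) then (σ i, σ (i+1)) else (σ (i+1), σ i) with hφ
    have hφs : ∀ i, s((φ i).1, (φ i).2) = s(σ i, σ (i+1)) := by
      intro i; simp only [hφ]; split_ifs
      · rfl
      · exact Sym2.eq_swap
    have hφi : Function.Injective φ := by
      intro i j h
      apply hinj
      simp only
      rw [← hφs i, ← hφs j, h]
    have hφg : ∀ i, g (φ i).1 (φ i).2 = g (σ i) (σ (i+1)) := by
      intro i; simp only [hφ]; split_ifs
      · rfl
      · exact hgs _ _
    have hφm : ∀ i, (φ i).1 < (φ i).2 ∧ H.Adj (φ i).1 (φ i).2 := by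
      intro i; simp only [hφ]; split_ifs with h
      · exact ⟨h, hH i⟩
      · exact ⟨lt_of_le_of_ne (not_lt.1 h) (hH i).ne.symm, (hH i).symm⟩
    have e1 : ∑ p ∈ Finset.univ.filter (fun p : Fin k × Fin k => p.1 < p.2 ∧ H.Adj p.1 p.2),
        min (α p.1 + α p.2 - (d : ℝ) * β p.1 p.2 - 1) 0
        = ∑ p ∈ Finset.univ.filter (fun p : Fin k × Fin k => p.1 < p.2 ∧ H.Adj p.1 p.2),
          g p.1 p.2 := by
      refine Finset.sum_congr rfl fun p hp => ?_
      have := (Finset.mem_filter.1 hp).2.1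
      simp only [hg, bsym, this, if_true]
    have e2 : ∑ i, g (σ i) (σ (i+1)) = ∑ p ∈ Finset.univ.image φ, g p.1 p.2 := by
      rw [Finset.sum_image (fun i _ j _ h => hφi h)]
      exact Finset.sum_congr rfl fun i _ => (hφg i).symm
    rw [e1, e2]
    have := Finset.sum_le_sum_of_subset_of_nonneg (f := fun p : Fin k × Fin k => - g p.1 p.2)
      (s := Finset.univ.image φ) (t := Finset.univ.filter (fun p : Fin k × Fin k => p.1 < p.2 ∧ H.Adj p.1 p.2))
      (by
        intro p hp
        obtain ⟨i, _, rfl⟩ := Finset.mem_image.1 hp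
        simpa using hφm i)
      (by intro p _ _; simp only [hg]; have := min_le_right (α p.1 + α p.2 - d * bsym β p.1 p.2 - 1) 0; linarith)
    simp only [Finset.sum_neg_distrib] at this
    linarith
  set Mm := ∑ i, g (σ i) (σ (i+1)) with hMm
  have hM0 : Mm ≤ 0 := Finset.sum_nonpos fun i _ => min_le_right _ _
  have hsumα : Mm ≤ 2 * ∑ i, α i - d * Y - k := by
    have h1 : Mm ≤ ∑ i, (α (σ i) + α (σ (i+1)) - d * y i - 1) :=
      Finset.sum_le_sum fun i _ => min_le_left _ _
    have h2 : ∑ i, α (σ i) = ∑ i, α i := Equiv.sum_comp σ α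
    have h3 : ∑ i, α (σ (i+1)) = ∑ i, α i := Equiv.sum_comp ((Equiv.addRight 1).trans σ) α
    rw [Finset.sum_sub_distrib, Finset.sum_sub_distrib, Finset.sum_add_distrib, h2, h3,
      ← Finset.mul_sum] at h1
    simp at h1
    linarith
  have hY0 : Y ≤ 0 := by
    refine Finset.sum_nonpos fun i _ => ?_
    simp only [hy, bsym]
    split_ifs with h
    · exact (hβ _ _ h).2
    · exact (hβ _ _ (lt_of_le_of_ne (not_lt.1 h) (hH i).ne.symm)).2
  have hkpos : (0:ℝ) < k := by exact_mod_cast NeZero.pos k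
  have hk2 : 2 < (k:ℝ) * (3 - τ) := by
    rw [div_lt_iff₀ (by linarith)] at hk; exact hk
  have hTY : T ≤ (τ - 1)/2 * Y := by
    have : (k:ℝ) * T ≤ k * ((τ - 1)/2 * Y) := by nlinarith
    exact le_of_mul_le_mul_left this hkpos
  unfold fExp
  have a1 := mul_le_mul_of_nonneg_left hE (by linarith : (0:ℝ) ≤ γ)
  have a2 := mul_le_mul_of_nonneg_left hsumα (by linarith : (0:ℝ) ≤ (τ-1)/2)
  have a3 := mul_le_mul_of_nonneg_left hTY hd0.le
  have a4 : γ * Mm ≤ (τ-1)/2 * Mm := by nlinarith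
  rw [← hT]
  convert_to (k:ℝ) + (1 - τ) * ∑ i, α i + d * T + γ * (∑ p ∈ Finset.univ.filter (fun p : Fin k × Fin k => p.1 < p.2 ∧ H.Adj p.1 p.2),
        min (α p.1 + α p.2 - (d : ℝ) * β p.1 p.2 - 1) 0) ≤ _
  nlinarith

lemma minBeta_zero {k : ℕ} (j : Fin k) : minBeta (fun _ _ : Fin k => (0:ℝ)) j = 0 := by
  unfold minBeta
  by_cases h : ∃ i : Fin k, i < j
  · obtain ⟨i, hi⟩ := h
    have : {x : ℝ | ∃ i, i < j ∧ x = 0} = {0} := by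
      ext x; constructor
      · rintro ⟨_, _, h⟩; exact h
      · rintro h; exact ⟨i, hi, h⟩
    rw [this]; exact csInf_singleton 0
  · have : {x : ℝ | ∃ i, i < j ∧ x = 0} = ∅ := by
      ext x; constructor
      · rintro ⟨i, hi, _⟩; exact h ⟨i, hi⟩
      · rintro ⟨⟩
    rw [this]; exact Real.sInf_empty

lemma opt_main {k : ℕ} [NeZero k] {d : ℕ} (hd : 1 ≤ d) (τ γ : ℝ) (hτ : τ ∈ Set.Ioo (2:ℝ) 3)
    (hγ : 1 < γ) (H : SimpleGraph (Fin k)) (σ : Equiv.Perm (Fin k))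
    (hH : ∀ i : Fin k, H.Adj (σ i) (σ (i + 1)))
    (hinj : Function.Injective (fun i : Fin k => s(σ i, σ (i+1))))
    (hk : 2 / (3 - τ) < (k : ℝ)) (s : StarKind) :
    starIsOptimal s τ γ d H (fun _ => 1 / 2) (fun _ _ => 0) := by
  have hval : fExp τ γ d H (fun _ => 1 / 2) (fun _ _ => 0) = (k:ℝ) * (3 - τ) / 2 := by
    unfold fExp
    simp only [minBeta_zero]
    norm_num
    ring
  have hf : Feasible τ d (k := k) (fun _ => 1 / 2) (fun _ _ => 0) := by
    refine ⟨fun i => ⟨by norm_num, ?_⟩, fun i j _ => ⟨?_, le_rfl⟩, ?_⟩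
    · have := hτ.1; have := hτ.2
      rw [div_le_div_iff₀ (by norm_num) (by linarith)]; linarith
    · simp
    · intro i j s _ _ _
      simp [bsym]
  have hb := opt_bound hd τ γ hτ hγ H σ hH hinj hk
  cases s with
  | sub => exact ⟨hf, fun α β h => by rw [hval]; exact hb α β h⟩
  | ind =>
    refine ⟨hf, ?_, fun α β h _ => by rw [hval]; exact hb α β h⟩
    intro i j _ _; norm_num

lemma cycle_inj {k : ℕ} [NeZero k] (hk : 3 ≤ k) (σ : Equiv.Perm (Fin k)) :
    Function.Injective (fun i : Fin k => s(σ i, σ (i+1))) := by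
  intro i j h
  simp only [Sym2.eq_iff, σ.injective.eq_iff] at h
  rcases h with h | ⟨h1, h2⟩
  · exact h.1
  · exfalso
    rw [h1, add_assoc] at h2
    have h3 : (1 + 1 : Fin k) = 0 := by simpa using h2
    have := congrArg Fin.val h3
    rw [Fin.val_add] at this
    have h1k : ((1 : Fin k) : ℕ) = 1 := by rw [Fin.val_one']; exact Nat.mod_eq_of_lt (by omega)
    rw [h1k] at this
    simp at this
    rw [Nat.mod_eq_of_lt (by omega)] at this
    omega


def qf (μ : Measure ℝ) (v : ℝ) : ℝ := sInf {x | 1 ≤ x ∧ μ.real (Set.Ioi x) ≤ Real.exp v}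

def expM : Measure ℝ := volume.withDensity (fun v => ENNReal.ofReal (Real.exp v))

lemma expM_lt (r : ℝ) (hr : 0 ≤ r) : expM {v | Real.exp v < r} = ENNReal.ofReal r := by
  rcases hr.eq_or_lt with rfl | hr
  · have : {v : ℝ | Real.exp v < 0} = ∅ := by
      ext v; simp [(Real.exp_pos v).le]
    simp [this]
  · have : {v : ℝ | Real.exp v < r} = Set.Iio (Real.log r) := by
      ext v; simp [Real.lt_log_iff_exp_lt hr]
    rw [this, expM, withDensity_apply _ measurableSet_Iio, ← ofReal_integral_eq_lintegral_ofReal]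
    · rw [← integral_Iic_eq_integral_Iio, integral_exp_Iic, Real.exp_log hr]
    · exact (integrableOn_exp_Iic _).mono_set Set.Iio_subset_Iic_self
    · exact Eventually.of_forall fun v => (Real.exp_pos v).le

instance : SigmaFinite expM := by
  unfold expM; infer_instance

lemma tail_le {τ c : ℝ} (hτ : 2 < τ) {μ : Measure ℝ} [IsProbabilityMeasure μ]
    (hW : WeightTail τ c μ) :
    ∃ C : ℝ, 1 ≤ C ∧ ∀ x : ℝ, 0 < x → μ.real (Set.Ioi x) ≤ C * x ^ (1 - τ) := by
  obtain ⟨hc, h1, ht⟩ := hW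
  have h2 : ∀ᶠ x : ℝ in atTop, (μ (Set.Ioi x)).toReal / (c * x ^ (1 - τ)) < 2 :=
    ht.eventually (gt_mem_nhds (by norm_num))
  obtain ⟨x0, hx0⟩ := eventually_atTop.1 h2
  set X := max x0 1 with hX
  have hX1 : 1 ≤ X := le_max_right _ _
  refine ⟨max 1 (max (2 * c) (X ^ (τ - 1))), le_max_left _ _, fun x hx => ?_⟩
  have hxp : 0 < x ^ (1 - τ) := Real.rpow_pos_of_pos hx _
  rcases le_total X x with h | h
  · have := hx0 x ((le_max_left _ _).trans h)
    rw [div_lt_iff₀ (by positivity)] at this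
    refine this.le.trans ?_
    rw [← mul_assoc]
    exact mul_le_mul_of_nonneg_right ((le_max_left _ _).trans (le_max_right _ _)) hxp.le
  · calc μ.real (Set.Ioi x) ≤ 1 := measureReal_le_one
      _ = x ^ (τ - 1) * x ^ (1 - τ) := by
        rw [← Real.rpow_add hx]; simp
      _ ≤ _ := by
        refine mul_le_mul_of_nonneg_right ?_ hxp.le
        refine le_trans ?_ ((le_max_right _ _).trans (le_max_right _ _))
        exact Real.rpow_le_rpow hx.le h (by linarith)

lemma qset_nonempty {τ c : ℝ} (hτ : 2 < τ) {μ : Measure ℝ} [IsProbabilityMeasure μ]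
    (hW : WeightTail τ c μ) (v : ℝ) :
    {x | 1 ≤ x ∧ μ.real (Set.Ioi x) ≤ Real.exp v}.Nonempty := by
  obtain ⟨C, hC, h⟩ := tail_le hτ hW
  have h1 : Tendsto (fun x : ℝ => C * x ^ (1 - τ)) atTop (nhds (C * 0)) := by
    refine Tendsto.const_mul _ ?_
    have := tendsto_rpow_neg_atTop (y := τ - 1) (by linarith)
    simpa using this
  rw [mul_zero] at h1
  obtain ⟨x, hx1, hx2⟩ := ((h1.eventually (gt_mem_nhds (Real.exp_pos v))).and (eventually_ge_atTop 1)).exists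
  exact ⟨x, hx2, (h x (by linarith)).trans hx1.le⟩

lemma qset_bdd (μ : Measure ℝ) (v : ℝ) :
    BddBelow {x | 1 ≤ x ∧ μ.real (Set.Ioi x) ≤ Real.exp v} := ⟨1, fun _ h => h.1⟩

lemma qf_le_iff {τ c : ℝ} (hτ : 2 < τ) {μ : Measure ℝ} [IsProbabilityMeasure μ]
    (hW : WeightTail τ c μ) (v x : ℝ) :
    qf μ v ≤ x ↔ 1 ≤ x ∧ μ.real (Set.Ioi x) ≤ Real.exp v := by
  have hne := qset_nonempty hτ hW v
  constructor
  · intro h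
    have h1 : 1 ≤ qf μ v := le_csInf hne fun _ h => h.1
    refine ⟨h1.trans h, ?_⟩
    have hmono : ∀ y, x < y → μ.real (Set.Ioi y) ≤ Real.exp v := by
      intro y hy
      obtain ⟨z, hz, hzy⟩ := exists_lt_of_csInf_lt hne (lt_of_le_of_lt h hy)
      exact (measureReal_mono (Set.Ioi_subset_Ioi hzy.le)).trans hz.2
    have hcdf : ∀ y, μ.real (Set.Ioi y) = 1 - ProbabilityTheory.cdf μ y := by
      intro y
      rw [ProbabilityTheory.cdf_eq_real, ← probReal_compl_eq_one_sub measurableSet_Iic, Set.compl_Iic]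
    have hcont := (ProbabilityTheory.cdf μ).right_continuous x
    have ht : Tendsto (fun y => μ.real (Set.Ioi y)) (nhdsWithin x (Set.Ioi x)) (nhds (μ.real (Set.Ioi x))) := by
      simp only [hcdf]
      exact (hcont.mono Set.Ioi_subset_Ici_self).tendsto.const_sub 1
    exact le_of_tendsto ht (eventually_nhdsWithin_of_forall fun y hy => hmono y hy)
  · intro h
    exact csInf_le (qset_bdd μ v) h

lemma one_le_qf {τ c : ℝ} (hτ : 2 < τ) {μ : Measure ℝ} [IsProbabilityMeasure μ]
    (hW : WeightTail τ c μ) (v : ℝ) : 1 ≤ qf μ v :=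
  ((qf_le_iff hτ hW v _).1 le_rfl).1

lemma qf_measurable {τ c : ℝ} (hτ : 2 < τ) {μ : Measure ℝ} [IsProbabilityMeasure μ]
    (hW : WeightTail τ c μ) : Measurable (qf μ) := by
  refine Antitone.measurable fun v v' h => ?_
  rw [qf_le_iff hτ hW]
  have := (qf_le_iff hτ hW v _).1 le_rfl
  exact ⟨this.1, this.2.trans (Real.exp_le_exp.2 h)⟩

lemma map_qf {τ c : ℝ} (hτ : 2 < τ) {μ : Measure ℝ} [IsProbabilityMeasure μ]
    (hW : WeightTail τ c μ) (L : ℝ) :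
    Measure.map (fun v => qf μ (v - L)) (expM.restrict (Set.Iio L)) = ENNReal.ofReal (Real.exp L) • μ := by
  have hm : Measurable (fun v => qf μ (v - L)) := (qf_measurable hτ hW).comp (by fun_prop)
  have hL : Set.Iio L = {v | Real.exp v < Real.exp L} := by ext v; simp
  have hfin : expM (Set.Iio L) = ENNReal.ofReal (Real.exp L) := by
    rw [hL, expM_lt _ (Real.exp_pos L).le]
  haveI : IsFiniteMeasure (expM.restrict (Set.Iio L)) := ⟨by
    rw [Measure.restrict_apply_univ, hfin]; exact ENNReal.ofReal_lt_top⟩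
  refine Measure.ext_of_Iic _ _ fun a => ?_
  rw [Measure.map_apply hm measurableSet_Iic, Measure.restrict_apply (hm measurableSet_Iic)]
  simp only [Measure.smul_apply, smul_eq_mul]
  rcases lt_or_ge a 1 with ha | ha
  · have e1 : ((fun v => qf μ (v - L)) ⁻¹' Set.Iic a ∩ Set.Iio L) = ∅ := by
      ext v
      simp only [Set.mem_inter_iff, Set.mem_preimage, Set.mem_Iic, Set.mem_empty_iff_false, iff_false]
      rintro ⟨h, _⟩
      have := one_le_qf hτ hW (v - L)
      linarith
    have e2 : μ (Set.Iic a) = 0 := measure_mono_null (fun x hx => lt_of_le_of_lt hx ha) hW.2.1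
    simp [e1, e2]
  · have ht0 : 0 ≤ μ.real (Set.Ioi a) := measureReal_nonneg
    have ht1 : μ.real (Set.Ioi a) ≤ 1 := measureReal_le_one
    have e1 : ((fun v => qf μ (v - L)) ⁻¹' Set.Iic a ∩ Set.Iio L)
        = {v | Real.exp v < Real.exp L} \ {v | Real.exp v < μ.real (Set.Ioi a) * Real.exp L} := by
      ext v
      simp only [Set.mem_inter_iff, Set.mem_preimage, Set.mem_Iic, qf_le_iff hτ hW, Set.mem_diff,
        Set.mem_setOf_eq, Set.mem_Iio, Real.exp_lt_exp, not_lt, ha, true_and, Real.exp_sub]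
      rw [le_div_iff₀ (Real.exp_pos L)]
      tauto
    have hfi : expM {v | Real.exp v < μ.real (Set.Ioi a) * Real.exp L} = _ := expM_lt _ (by positivity)
    rw [e1, measure_diff, expM_lt _ (Real.exp_pos L).le, hfi]
    · rw [← ENNReal.ofReal_sub _ (by positivity), ← ofReal_measureReal (μ := μ) (s := Set.Iic a),
        ← ENNReal.ofReal_mul (Real.exp_pos L).le]
      congr 1
      have : μ.real (Set.Ioi a) = 1 - μ.real (Set.Iic a) := by
        rw [← probReal_compl_eq_one_sub measurableSet_Iic, Set.compl_Iic]
      rw [this]; ring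
    · intro v hv
      simp only [Set.mem_setOf_eq] at hv ⊢
      refine hv.trans_le ?_
      nlinarith [Real.exp_pos L]
    · exact (measurableSet_lt Real.measurable_exp measurable_const).nullMeasurableSet
    · rw [hfi]; exact ENNReal.ofReal_ne_top

lemma qf_le {τ c : ℝ} (hτ : 2 < τ) {μ : Measure ℝ} [IsProbabilityMeasure μ]
    (hW : WeightTail τ c μ) :
    ∃ C : ℝ, 0 < C ∧ ∀ v < 0, qf μ v ≤ C * Real.exp (-(1/(τ-1)) * v) := by
  obtain ⟨C, hC, h⟩ := tail_le hτ hW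
  have hC0 : 0 < C := by linarith
  have hτ1 : 0 < τ - 1 := by linarith
  refine ⟨C ^ (1/(τ-1)), by positivity, fun v hv => ?_⟩
  have e : C ^ (1/(τ-1)) * Real.exp (-(1/(τ-1)) * v) = (C * Real.exp (-v)) ^ (1/(τ-1)) := by
    rw [Real.mul_rpow hC0.le (Real.exp_pos _).le, ← Real.exp_mul]; ring_nf
  have hx1 : 1 ≤ C * Real.exp (-v) := by
    have : 1 ≤ Real.exp (-v) := Real.one_le_exp (by linarith)
    nlinarith
  have hx2 : 1 ≤ (C * Real.exp (-v)) ^ (1/(τ-1)) := Real.one_le_rpow hx1 (by positivity)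
  rw [e, qf_le_iff hτ hW]
  refine ⟨hx2, (h _ (by linarith)).trans ?_⟩
  rw [← Real.rpow_mul (by linarith), show 1/(τ-1) * (1 - τ) = -1 by field_simp; ring,
    Real.rpow_neg_one, Real.exp_neg]
  have := Real.exp_pos v
  field_simp
  exact le_rfl

lemma qf_asymp {τ c : ℝ} (hτ : 2 < τ) {μ : Measure ℝ} [IsProbabilityMeasure μ]
    (hW : WeightTail τ c μ) :
    Tendsto (fun v => qf μ v * Real.exp ((1/(τ-1)) * v)) atBot (nhds (c ^ (1/(τ-1)))) := by
  obtain ⟨hc, h1, ht⟩ := id hW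
  have hτ1 : 0 < τ - 1 := by linarith
  set a := 1/(τ-1) with ha
  have ha0 : 0 < a := by positivity
  -- key: asymptotics of the tail at `lam * exp (-a v)`
  have key : ∀ lam : ℝ, 0 < lam → Tendsto (fun v => μ.real (Set.Ioi (lam * Real.exp (-a * v))) / Real.exp v)
      atBot (nhds (c * lam ^ (1 - τ))) := by
    intro lam hlam
    have hx : Tendsto (fun v : ℝ => lam * Real.exp (-a * v)) atBot atTop := by
      refine Tendsto.const_mul_atTop hlam (Real.tendsto_exp_atTop.comp ?_)
      exact (tendsto_const_mul_atTop_of_neg (by linarith)).2 tendsto_id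
    have h2 := (ht.comp hx).mul_const (c * lam ^ (1 - τ))
    rw [one_mul] at h2
    refine h2.congr fun v => ?_
    have e : (lam * Real.exp (-a * v)) ^ (1 - τ) = lam ^ (1 - τ) * Real.exp v := by
      rw [Real.mul_rpow hlam.le (Real.exp_pos _).le, ← Real.exp_mul]
      congr 2
      rw [ha]; field_simp; ring
    simp only [Function.comp]
    rw [e]
    have := Real.rpow_pos_of_pos hlam (1 - τ)
    have := Real.exp_pos v
    change μ.real _ / _ * _ = _
    field_simp
  have hca : 0 < c ^ a := by positivity
  have hcc : c * (c ^ a) ^ (1 - τ) = 1 := by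
    rw [← Real.rpow_mul hc.le, show a * (1 - τ) = -1 by rw [ha]; field_simp; ring, Real.rpow_neg_one]
    field_simp
  have hee : ∀ v, Real.exp (-a * v) * Real.exp (a * v) = 1 := by
    intro v; rw [← Real.exp_add]; simp
  rw [tendsto_order]
  constructor
  · intro l hl
    set lam := max l (c ^ a / 2) with hlam
    have hlam0 : 0 < lam := lt_of_lt_of_le (by positivity) (le_max_right _ _)
    have hlam1 : lam < c ^ a := max_lt hl (by linarith)
    have h3 : 1 < c * lam ^ (1 - τ) := by
      refine hcc.symm.trans_lt ?_
      exact mul_lt_mul_of_pos_left (Real.rpow_lt_rpow_of_neg hlam0 hlam1 (by linarith)) hc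
    filter_upwards [(key lam hlam0).eventually (lt_mem_nhds h3)] with v hv
    rw [lt_div_iff₀ (Real.exp_pos v), one_mul] at hv
    have : ¬ qf μ v ≤ lam * Real.exp (-a * v) := by
      rw [qf_le_iff hτ hW]; intro h; linarith [h.2]
    push Not at this
    calc l ≤ lam := le_max_left _ _
      _ = lam * Real.exp (-a * v) * Real.exp (a * v) := by rw [mul_assoc, hee, mul_one]
      _ < _ := mul_lt_mul_of_pos_right this (Real.exp_pos _)
  · intro u hu
    set lam := (c ^ a + u) / 2 with hlam
    have hlam1 : c ^ a < lam := by rw [hlam]; linarith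
    have hlam0 : 0 < lam := hca.trans hlam1
    have hlamu : lam < u := by rw [hlam]; linarith
    have h3 : c * lam ^ (1 - τ) < 1 := by
      refine lt_of_lt_of_eq ?_ hcc
      exact mul_lt_mul_of_pos_left (Real.rpow_lt_rpow_of_neg hca hlam1 (by linarith)) hc
    have hx : Tendsto (fun v : ℝ => lam * Real.exp (-a * v)) atBot atTop := by
      refine Tendsto.const_mul_atTop hlam0 (Real.tendsto_exp_atTop.comp ?_)
      exact (tendsto_const_mul_atTop_of_neg (by linarith)).2 tendsto_id
    filter_upwards [(key lam hlam0).eventually (gt_mem_nhds h3), hx.eventually_ge_atTop 1] with v hv hv1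
    rw [div_lt_iff₀ (Real.exp_pos v), one_mul] at hv
    have : qf μ v ≤ lam * Real.exp (-a * v) := by
      rw [qf_le_iff hτ hW]; exact ⟨hv1, hv.le⟩
    calc qf μ v * Real.exp (a * v) ≤ lam * Real.exp (-a * v) * Real.exp (a * v) :=
          mul_le_mul_of_nonneg_right this (Real.exp_pos _).le
      _ = lam := by rw [mul_assoc, hee, mul_one]
      _ < u := hlamu

lemma wMean_pos {τ c : ℝ} (hτ : 2 < τ) {μ : Measure ℝ} [IsProbabilityMeasure μ]
    (hW : WeightTail τ c μ) : 0 < wMean μ := by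
  have hτ1 : 0 < τ - 1 := by linarith
  have hge : ∀ᵐ x ∂μ, 1 ≤ x := by
    rw [ae_iff]; simpa [Set.Iio, not_le] using hW.2.1
  have hmap := map_qf hτ hW 0
  simp only [sub_zero, Real.exp_zero, ENNReal.ofReal_one, one_smul] at hmap
  have hint : Integrable (fun x : ℝ => x) μ := by
    refine ⟨measurable_id.aestronglyMeasurable, ?_⟩
    unfold HasFiniteIntegral
    obtain ⟨C, hC, h⟩ := qf_le hτ hW
    set a := 1/(τ-1) with ha
    have ha1 : a < 1 := by rw [ha, div_lt_one hτ1]; linarith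
    have : ∫⁻ x : ℝ, ‖x‖ₑ ∂(Measure.map (qf μ) (expM.restrict (Set.Iio 0))) < ⊤ := by
      rw [lintegral_map (by fun_prop) (qf_measurable hτ hW), expM,
        restrict_withDensity measurableSet_Iio, lintegral_withDensity_eq_lintegral_mul _ (by fun_prop)
          (g := fun v => ‖qf μ v‖ₑ) (measurable_enorm.comp (qf_measurable hτ hW))]
      calc _ ≤ ∫⁻ v in Set.Iio 0, ENNReal.ofReal (C * Real.exp ((1 - a) * v)) := by
            refine setLIntegral_mono (by fun_prop) fun v hv => ?_
            have h1 := one_le_qf hτ hW v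
            simp only [Pi.mul_apply]
            rw [Real.enorm_of_nonneg (by linarith), ← ENNReal.ofReal_mul (Real.exp_pos _).le]
            refine ENNReal.ofReal_le_ofReal ?_
            calc _ ≤ Real.exp v * (C * Real.exp (-a * v)) :=
                  mul_le_mul_of_nonneg_left (h v hv) (Real.exp_pos _).le
              _ = C * (Real.exp v * Real.exp (-a * v)) := by ring
              _ = _ := by rw [← Real.exp_add]; ring_nf
        _ < ⊤ := by
          have : IntegrableOn (fun v : ℝ => C * Real.exp ((1 - a) * v)) (Set.Iio 0) := by
            refine Integrable.const_mul ?_ C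
            exact (integrableOn_exp_mul_Iic (by linarith) 0).mono_set Set.Iio_subset_Iic_self
          exact this.lintegral_lt_top
    have hmap2 : Measure.map (qf μ) (expM.restrict (Set.Iio 0)) = μ := hmap
    rwa [hmap2] at this
  have : (1:ℝ) ≤ wMean μ := by
    unfold wMean
    calc (1:ℝ) = ∫ x, (1:ℝ) ∂μ := by simp
      _ ≤ _ := integral_mono_ae (integrable_const _) hint hge
  linarith


lemma precomp_mp {ι κ X : Type*} [Fintype ι] [Fintype κ] [MeasurableSpace X] (ν : Measure X)
    [IsProbabilityMeasure ν] (f : ι → κ) (hf : Function.Injective f) :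
    MeasurePreserving (fun (x : κ → X) (i : ι) => x (f i)) (Measure.pi fun _ => ν) (Measure.pi fun _ => ν) := by
  classical
  refine ⟨by fun_prop, ?_⟩
  refine (Measure.pi_eq fun s hs => ?_).symm
  rw [Measure.map_apply (by fun_prop) (MeasurableSet.univ_pi hs)]
  have e : (fun (x : κ → X) (i : ι) => x (f i)) ⁻¹' (Set.univ.pi s)
      = Set.univ.pi (fun e => if h : ∃ i, f i = e then s h.choose else Set.univ) := by
    ext x
    simp only [Set.mem_preimage, Set.mem_pi, Set.mem_univ, true_imp_iff]
    constructor
    · intro h e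
      split_ifs with he
      · have := h he.choose
        rwa [he.choose_spec] at this
      · trivial
    · intro h i
      have h1 := h (f i)
      have he : ∃ i', f i' = f i := ⟨i, rfl⟩
      rw [dif_pos he] at h1
      rwa [hf he.choose_spec] at h1
  rw [e, Measure.pi_pi]
  have e2 : ∏ i, ν (s i) = ∏ e ∈ Finset.univ.image f,
      ν (if h : ∃ i, f i = e then s h.choose else Set.univ) := by
    rw [Finset.prod_image (fun i _ j _ h => hf h)]
    refine Finset.prod_congr rfl fun i _ => ?_
    have he : ∃ i', f i' = f i := ⟨i, rfl⟩
    rw [dif_pos he, hf he.choose_spec]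
  rw [e2]
  symm
  refine Finset.prod_subset (Finset.subset_univ _) fun e _ he => ?_
  have : ¬ ∃ i, f i = e := by
    rintro ⟨i, rfl⟩; exact he (Finset.mem_image_of_mem f (Finset.mem_univ i))
  rw [dif_neg this, measure_univ]

lemma lint_prod {X : Type*} [MeasurableSpace X] (ν : Measure X) [SigmaFinite ν] (n : ℕ)
    (f : Fin n → X → ENNReal) (hf : ∀ i, Measurable (f i)) :
    ∫⁻ x, ∏ i, f i (x i) ∂(Measure.pi fun _ : Fin n => ν) = ∏ i, ∫⁻ x, f i x ∂ν := by
  induction n with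
  | zero => simp
  | succ n ih =>
    have hmp := (measurePreserving_piFinSuccAbove (fun _ : Fin (n+1) => ν) 0).symm
    rw [← hmp.lintegral_comp (by fun_prop)]
    simp only [Fin.prod_univ_succ]
    rw [← ih (fun i => f i.succ) (fun i => hf _)]
    have hm2 : Measurable fun x : Fin n → X => ∏ i, f i.succ (x i) :=
      Finset.measurable_prod _ fun i _ => (hf _).comp (measurable_pi_apply i)
    rw [← lintegral_prod_mul (hf 0).aemeasurable hm2.aemeasurable]
    refine lintegral_congr fun z => ?_
    simp [MeasurableEquiv.piFinSuccAbove]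

lemma unc_meas {X Y : Type*} [MeasurableSpace X] [MeasurableSpace Y] {P : X → X → ENNReal}
    (hP : Measurable (Function.uncurry P)) {g1 g2 : Y → X} (h1 : Measurable g1) (h2 : Measurable g2) :
    Measurable fun y => P (g1 y) (g2 y) := hP.comp (h1.prodMk h2)

lemma path_lint {X : Type*} [MeasurableSpace X] (ν : Measure X) [IsProbabilityMeasure ν] (m : ℕ)
    (P : Fin m → X → X → ENNReal) (hP : ∀ i, Measurable (Function.uncurry (P i))) (J : Fin m → ENNReal)
    (h : ∀ i y, ∫⁻ x, P i x y ∂ν ≤ J i) :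
    ∫⁻ x, ∏ i, P i (x i.castSucc) (x i.succ) ∂(Measure.pi fun _ : Fin (m+1) => ν) ≤ ∏ i, J i := by
  have hPm : ∀ i (g1 g2 : (Fin (m+1) → X) → X), Measurable g1 → Measurable g2 →
      Measurable fun x => P i (g1 x) (g2 x) := fun i g1 g2 h1 h2 => (hP i).comp (h1.prodMk h2)
  induction m with
  | zero => simp
  | succ m ih =>
    have hmp := (measurePreserving_piFinSuccAbove (fun _ : Fin (m+1+1) => ν) 0).symm
    have hmeas : Measurable fun x : Fin (m+1+1) → X => ∏ i, P i (x i.castSucc) (x i.succ) :=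
      Finset.measurable_prod _ fun i _ => hPm i _ _ (by fun_prop) (by fun_prop)
    rw [← hmp.lintegral_comp hmeas]
    have hmeas2 := hmeas.comp hmp.measurable
    simp only [Function.comp_def] at hmeas2
    rw [lintegral_prod_symm _ hmeas2.aemeasurable]
    have hP' : ∀ i : Fin m, Measurable (Function.uncurry (P i.succ)) := fun i => hP _
    have ih' := ih (fun i => P i.succ) hP' (fun i => J i.succ) (fun i y => h _ y)
      (fun i g1 g2 h1 h2 => (hP' i).comp (h1.prodMk h2))
    calc _ = ∫⁻ y, (∫⁻ x, P 0 x (y 0) ∂ν) * ∏ i : Fin m, P i.succ (y i.castSucc) (y i.succ)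
            ∂(Measure.pi fun _ : Fin (m+1) => ν) := by
          refine lintegral_congr fun y => ?_
          rw [← lintegral_mul_const _ (unc_meas (hP 0) measurable_id' measurable_const)]
          refine lintegral_congr fun x => ?_
          rw [Fin.prod_univ_succ]
          simp [MeasurableEquiv.piFinSuccAbove, Fin.castSucc_succ]
      _ ≤ ∫⁻ y, J 0 * ∏ i : Fin m, P i.succ (y i.castSucc) (y i.succ)
            ∂(Measure.pi fun _ : Fin (m+1) => ν) := by
          refine lintegral_mono fun y => ?_
          gcongr
          exact h 0 _
      _ = J 0 * ∫⁻ y, ∏ i : Fin m, P i.succ (y i.castSucc) (y i.succ)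
            ∂(Measure.pi fun _ : Fin (m+1) => ν) := by
          rw [lintegral_const_mul]
          exact Finset.measurable_prod _ fun i _ => unc_meas (hP' i) (measurable_pi_apply _) (measurable_pi_apply _)
      _ ≤ _ := by
          rw [Fin.prod_univ_succ]
          gcongr

lemma cycle_lint {X : Type*} [MeasurableSpace X] (ν : Measure X) [IsProbabilityMeasure ν] (m : ℕ)
    (σ : Equiv.Perm (Fin (m+1)))
    (P : Fin (m+1) → X → X → ENNReal) (hP : ∀ i, Measurable (Function.uncurry (P i)))
    (hP1 : ∀ i x y, P i x y ≤ 1) (J : Fin (m+1) → ENNReal)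
    (h : ∀ i y, ∫⁻ x, P i x y ∂ν ≤ J i) (e : Fin (m+1)) :
    (∫⁻ x, ∏ i, P i (x (σ i)) (x (σ (i+1))) ∂(Measure.pi fun _ : Fin (m+1) => ν)) * J e ≤ ∏ i, J i := by
  have h1 := path_lint ν m (fun j => P (rotEquiv e j.castSucc)) (fun j => hP _)
    (fun j => J (rotEquiv e j.castSucc)) (fun j y => h _ y)
  have hmp := precomp_mp ν (fun j => σ (rotEquiv e j)) (σ.injective.comp (rotEquiv e).injective)
  have hm1 : Measurable fun x : Fin (m+1) → X =>
      ∏ j : Fin m, P (rotEquiv e j.castSucc) (x j.castSucc) (x j.succ) :=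
    Finset.measurable_prod _ fun i _ => unc_meas (hP _) (measurable_pi_apply _) (measurable_pi_apply _)
  rw [← hmp.lintegral_comp hm1] at h1
  have h2 : ∏ i, J i = (∏ j : Fin m, J (rotEquiv e j.castSucc)) * J e := by
    rw [← Equiv.prod_comp (rotEquiv e) J, Fin.prod_univ_castSucc, rot_last]
  rw [h2]
  gcongr
  refine le_trans (lintegral_mono fun x => ?_) h1
  rw [← Equiv.prod_comp (rotEquiv e) (fun i => P i (x (σ i)) (x (σ (i+1)))), Fin.prod_univ_castSucc]
  simp only [rot_succ]
  exact mul_le_of_le_one_right' (hP1 _ _ _)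

lemma geom_mean (m : ℕ) (X : ENNReal) (J : Fin (m+1) → ENNReal) (hJ0 : ∀ i, J i ≠ 0)
    (hJ1 : ∀ i, J i ≠ ⊤) (h : ∀ e, X * J e ≤ ∏ i, J i) :
    X ≤ ∏ i, J i ^ ((m:ℝ)/(m+1)) := by
  set Pj := ∏ i, J i with hPj
  have hPj0 : Pj ≠ 0 := Finset.prod_ne_zero_iff.2 fun i _ => hJ0 i
  have hPj1 : Pj ≠ ⊤ := ENNReal.prod_ne_top fun i _ => hJ1 i
  have h1 : X ^ (m+1) * Pj ≤ Pj ^ m * Pj := by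
    have := Finset.prod_le_prod' (s := Finset.univ) (fun e _ => h e)
    rw [Finset.prod_mul_distrib] at this
    simpa [pow_succ] using this
  have h2 : X ^ (m+1) ≤ Pj ^ m := (ENNReal.mul_le_mul_iff_left hPj0 hPj1).1 h1
  have h3 := ENNReal.rpow_le_rpow h2 (by positivity : (0:ℝ) ≤ 1/((m:ℝ)+1))
  rw [← ENNReal.rpow_natCast, ← ENNReal.rpow_mul, ← ENNReal.rpow_natCast, ← ENNReal.rpow_mul] at h3
  have e1 : (((m+1:ℕ):ℝ)) * (1/((m:ℝ)+1)) = 1 := by push_cast; field_simp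
  rw [e1, ENNReal.rpow_one] at h3
  rw [ENNReal.prod_rpow_of_nonneg (by positivity)]
  convert h3 using 2
  ring

instance torusProb (d : ℕ) : IsProbabilityMeasure (volume : Measure (Torus d)) := by
  have : IsProbabilityMeasure (volume : Measure (AddCircle (1:ℝ))) := ⟨by
    rw [AddCircle.measure_univ]; simp⟩
  unfold Torus
  infer_instance

lemma torus_ball (d : ℕ) (y : Torus d) (R : ℝ) (hR : 0 ≤ R) :
    volume {x : Torus d | dist x y ≤ R} ≤ ENNReal.ofReal ((2*R)^d) := by
  have h := MeasureTheory.volume_pi_closedBall (α := fun _ : Fin d => AddCircle (1:ℝ)) y hR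
  change volume (Metric.closedBall y R) ≤ _
  rw [h]
  simp only [AddCircle.volume_closedBall]
  rw [Finset.prod_const, Finset.card_univ, Fintype.card_fin, ENNReal.ofReal_pow (by positivity)]
  gcongr
  exact min_le_right _ _

lemma J_bound (d : ℕ) (hd : 1 ≤ d) (γ : ℝ) (hγ : 1 < γ) : ∃ K : ℝ, 0 < K ∧ ∀ (s : ℝ), 0 < s →
    ∀ y : Torus d, ∫⁻ x, ENNReal.ofReal (min 1 ((s / dist x y ^ d) ^ γ)) ≤ ENNReal.ofReal (min 1 (K * s)) := by
  have hg0 : 0 < γ := by linarith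
  have hginv : γ⁻¹ < 1 := inv_lt_one_of_one_lt₀ hγ
  have hint : IntegrableOn (fun u : ℝ => u ^ (-γ⁻¹)) (Set.Ioc 0 1) := by
    have := intervalIntegral.intervalIntegrable_rpow' (a := 0) (b := 1) (r := -γ⁻¹) (by linarith)
    rwa [intervalIntegrable_iff_integrableOn_Ioc_of_le zero_le_one] at this
  set K0 := ∫ u in Set.Ioc (0:ℝ) 1, u ^ (-γ⁻¹) with hK0
  have hK0n : 0 ≤ K0 := setIntegral_nonneg measurableSet_Ioc fun u hu => Real.rpow_nonneg hu.1.le _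
  refine ⟨2^d * (K0 + 1), by positivity, fun s hs y => ?_⟩
  have hpn : ∀ x : Torus d, 0 ≤ min 1 ((s / dist x y ^ d) ^ γ) := fun x =>
    le_min zero_le_one (Real.rpow_nonneg (by positivity) _)
  have hmeas : Measurable fun x : Torus d => min 1 ((s / dist x y ^ d) ^ γ) := by fun_prop
  have hone : ∫⁻ x : Torus d, ENNReal.ofReal (min 1 ((s / dist x y ^ d) ^ γ)) ≤ ENNReal.ofReal 1 := by
    calc _ ≤ ∫⁻ x : Torus d, 1 := by
          refine lintegral_mono fun x => ?_
          rw [← ENNReal.ofReal_one]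
          exact ENNReal.ofReal_le_ofReal (min_le_left _ _)
      _ = _ := by simp
  have htwo : ∫⁻ x : Torus d, ENNReal.ofReal (min 1 ((s / dist x y ^ d) ^ γ))
      ≤ ENNReal.ofReal (2^d * (K0 + 1) * s) := by
    rw [lintegral_eq_lintegral_meas_le _ (Eventually.of_forall hpn) hmeas.aemeasurable]
    calc _ ≤ ∫⁻ u in Set.Ioi (0:ℝ), (Set.Ioc (0:ℝ) 1).indicator (fun u => ENNReal.ofReal (2^d * s * u ^ (-γ⁻¹))) u := by
          refine setLIntegral_mono (by measurability) fun u hu => ?_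
          have hu0 : 0 < u := hu
          by_cases h1 : u ≤ 1
          · rw [Set.indicator_of_mem (show u ∈ Set.Ioc (0:ℝ) 1 from ⟨hu, h1⟩)]
            have hb : 0 ≤ s * u ^ (-γ⁻¹) := by positivity
            refine le_trans (measure_mono ?_) ((torus_ball d y ((s * u ^ (-γ⁻¹))^((d:ℝ)⁻¹)) (by positivity)).trans_eq ?_)
            · intro x hx
              have hx1 : u ≤ (s / dist x y ^ d) ^ γ := le_trans hx (min_le_right _ _)
              change dist x y ≤ _
              have hρ : 0 < dist x y ^ d := by
                rcases (pow_nonneg dist_nonneg d : 0 ≤ dist x y ^ d).eq_or_lt with h | h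
                · rw [← h, div_zero, Real.zero_rpow hg0.ne'] at hx1; linarith
                · exact h
              have h2 := Real.rpow_le_rpow hu0.le hx1 (inv_pos.2 hg0).le
              rw [← Real.rpow_mul (by positivity), mul_inv_cancel₀ hg0.ne', Real.rpow_one, le_div_iff₀ hρ] at h2
              have h3 : dist x y ^ d ≤ s * u ^ (-γ⁻¹) := by
                rw [Real.rpow_neg hu0.le, ← div_eq_mul_inv, le_div_iff₀ (by positivity)]
                linarith
              have h4 := Real.rpow_le_rpow hρ.le h3 (by positivity : 0 ≤ ((d:ℝ)⁻¹))
              rwa [Real.pow_rpow_inv_natCast dist_nonneg (by omega)] at h4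
            · congr 1
              rw [mul_pow, Real.rpow_inv_natCast_pow hb (by omega)]; ring
          · have : {a : Torus d | u ≤ min 1 ((s / dist a y ^ d) ^ γ)} = ∅ := by
              ext x
              simp only [Set.mem_empty_iff_false, iff_false]
              intro hx
              exact h1 (le_trans hx (min_le_left _ _))
            rw [this]; simp
      _ ≤ ∫⁻ u in Set.Ioc (0:ℝ) 1, ENNReal.ofReal (2^d * s * u ^ (-γ⁻¹)) := by
          refine (setLIntegral_le_lintegral _ _).trans_eq ?_
          rw [lintegral_indicator measurableSet_Ioc]
      _ = ENNReal.ofReal (2^d * s * K0) := by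
          rw [hK0, ← integral_const_mul, ofReal_integral_eq_lintegral_ofReal (hint.const_mul _)]
          filter_upwards [ae_restrict_mem measurableSet_Ioc] with u hu
          have := Real.rpow_nonneg hu.1.le (-γ⁻¹)
          positivity
      _ ≤ _ := by
          refine ENNReal.ofReal_le_ofReal ?_
          have : 0 < 2^d * s := by positivity
          nlinarith
  rcases min_cases 1 (2^d * (K0 + 1) * s) with ⟨h, _⟩ | ⟨h, _⟩ <;> rw [h]
  · exact hone
  · exact htwo


lemma pi_expM (n : ℕ) : (Measure.pi fun _ : Fin n => expM)
    = (volume : Measure (Fin n → ℝ)).withDensity (fun v => ∏ i, ENNReal.ofReal (Real.exp (v i))) := by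
  refine Measure.pi_eq fun s hs => ?_
  rw [withDensity_apply _ (MeasurableSet.univ_pi hs), ← lintegral_indicator (MeasurableSet.univ_pi hs)]
  have e : (Set.univ.pi s).indicator (fun v : Fin n → ℝ => ∏ i, ENNReal.ofReal (Real.exp (v i)))
      = fun v => ∏ i, (s i).indicator (fun t => ENNReal.ofReal (Real.exp t)) (v i) := by
    ext v
    by_cases h : v ∈ Set.univ.pi s
    · rw [Set.indicator_of_mem h]
      refine Finset.prod_congr rfl fun i _ => ?_
      rw [Set.indicator_of_mem (h i trivial)]
    · rw [Set.indicator_of_notMem h]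
      simp only [Set.mem_pi, Set.mem_univ, true_imp_iff, not_forall] at h
      obtain ⟨i, hi⟩ := h
      symm
      exact Finset.prod_eq_zero (Finset.mem_univ i) (Set.indicator_of_notMem hi _)
  rw [e, volume_pi, lint_prod _ _ _ (fun i => (by fun_prop : Measurable fun t => ENNReal.ofReal (Real.exp t)).indicator (hs i))]
  refine Finset.prod_congr rfl fun i _ => ?_
  rw [lintegral_indicator (hs i), expM, withDensity_apply _ (hs i)]

def cycLin {m : ℕ} (σ : Equiv.Perm (Fin (m+1))) : (Fin (m+1) → ℝ) →ₗ[ℝ] (Fin (m+1) → ℝ) where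
  toFun v i := v (σ i) + v (σ (i+1))
  map_add' v w := by ext i; simp; ring
  map_smul' c v := by ext i; simp; ring

lemma cycLin_det {m : ℕ} (hodd : Odd (m+1)) (σ : Equiv.Perm (Fin (m+1))) : LinearMap.det (cycLin σ) ≠ 0 := by
  have hinj : Function.Injective (cycLin σ) := by
    rw [← LinearMap.ker_eq_bot, LinearMap.ker_eq_bot']
    intro v hv
    have h1 : ∀ i, v (σ (i+1)) = - v (σ i) := by
      intro i
      have := congrFun hv i
      simp only [cycLin, LinearMap.coe_mk, AddHom.coe_mk, Pi.zero_apply] at this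
      linarith
    have h2 : ∀ j : Fin (m+1), v (σ j) = (-1)^j.val * v (σ 0) := by
      intro j
      induction j using Fin.induction with
      | zero => simp
      | succ j ih =>
        rw [← Fin.coeSucc_eq_succ, h1, ih, Fin.coeSucc_eq_succ, Fin.val_succ, pow_succ, Fin.val_castSucc]
        ring
    have h3 := h1 (Fin.last m)
    rw [Fin.last_add_one, h2 (Fin.last m), Fin.val_last] at h3
    have h6 : (-1:ℝ)^m = 1 := by
      have := hodd.neg_one_pow (α := ℝ)
      rw [pow_succ] at this
      linarith
    have h4 : v (σ 0) = 0 := by rw [h6] at h3; linarith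
    ext i
    have h5 := h2 (σ.symm i)
    rw [h4, mul_zero] at h5
    simpa using h5
  have := LinearEquiv.isUnit_det' (LinearEquiv.ofInjectiveEndo (cycLin σ) hinj)
  have e : ((LinearEquiv.ofInjectiveEndo (cycLin σ) hinj : (Fin (m+1) → ℝ) ≃ₗ[ℝ] _) :
      (Fin (m+1) → ℝ) →ₗ[ℝ] (Fin (m+1) → ℝ)) = cycLin σ := by
    ext; simp
  rw [e] at this
  exact this.ne_zero

lemma phi_int (a θ K : ℝ) (ha : 0 < a) (hθ : 0 ≤ θ) (h : 1/2 < a * θ) (hK : 0 < K) :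
    ∫⁻ z : ℝ, ENNReal.ofReal (Real.exp (z/2)) * ENNReal.ofReal (min 1 (K * Real.exp (-a * z))) ^ θ < ⊤ := by
  rw [← lintegral_add_compl _ (measurableSet_Iic (a := (0:ℝ)))]
  refine ENNReal.add_lt_top.2 ⟨?_, ?_⟩
  · calc _ ≤ ∫⁻ z in Set.Iic (0:ℝ), ENNReal.ofReal (Real.exp ((1/2) * z)) := by
          refine lintegral_mono fun z => ?_
          have : ENNReal.ofReal (min 1 (K * Real.exp (-a * z))) ^ θ ≤ 1 := by
            refine ENNReal.rpow_le_one ?_ hθ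
            rw [← ENNReal.ofReal_one]
            exact ENNReal.ofReal_le_ofReal (min_le_left _ _)
          calc _ ≤ ENNReal.ofReal (Real.exp (z/2)) * 1 := by gcongr
            _ = _ := by rw [mul_one]; ring_nf
      _ < ⊤ := (integrableOn_exp_mul_Iic (by norm_num) 0).lintegral_lt_top
  · rw [Set.compl_Iic]
    calc _ ≤ ∫⁻ z in Set.Ioi (0:ℝ), ENNReal.ofReal (K ^ θ * Real.exp ((1/2 - a * θ) * z)) := by
          refine lintegral_mono fun z => ?_
          calc _ ≤ ENNReal.ofReal (Real.exp (z/2)) * ENNReal.ofReal (K * Real.exp (-a * z)) ^ θ := by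
                gcongr; exact min_le_right _ _
            _ = _ := by
                rw [ENNReal.ofReal_rpow_of_nonneg (by positivity) hθ, ← ENNReal.ofReal_mul (Real.exp_pos _).le,
                  Real.mul_rpow hK.le (Real.exp_pos _).le, ← Real.exp_mul]
                congr 1
                rw [mul_left_comm, ← Real.exp_add]
                ring_nf
      _ < ⊤ := by
          have : IntegrableOn (fun z : ℝ => K ^ θ * Real.exp ((1/2 - a * θ) * z)) (Set.Ioi 0) :=
            (integrableOn_exp_mul_Ioi (by linarith) 0).const_mul _
          exact this.lintegral_lt_top

def domF {m d : ℕ} (a γ C : ℝ) (σ : Equiv.Perm (Fin (m+1))) (v : Fin (m+1) → ℝ) (x : Fin (m+1) → Torus d) : ENNReal :=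
  ∏ i, ENNReal.ofReal (min 1 ((C * Real.exp (-a * (v (σ i) + v (σ (i+1)))) / dist (x (σ i)) (x (σ (i+1))) ^ d) ^ γ))

lemma domF_meas {m d : ℕ} (a γ C : ℝ) (σ : Equiv.Perm (Fin (m+1))) :
    Measurable (fun z : (Fin (m+1) → ℝ) × (Fin (m+1) → Torus d) => domF a γ C σ z.1 z.2) := by
  unfold domF
  refine Finset.measurable_prod _ fun i _ => ?_
  fun_prop

lemma dom_finite {m d : ℕ} (hd : 1 ≤ d) (a γ C : ℝ) (ha : 0 < a) (h : 1/2 < a * ((m:ℝ)/(m+1)))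
    (hγ : 1 < γ) (hC : 0 < C) (σ : Equiv.Perm (Fin (m+1))) (hodd : Odd (m+1)) :
    ∫⁻ z, domF (d := d) a γ C σ z.1 z.2 ∂((Measure.pi fun _ : Fin (m+1) => expM).prod
      (Measure.pi fun _ : Fin (m+1) => (volume : Measure (Torus d)))) < ⊤ := by
  rw [lintegral_prod _ (domF_meas a γ C σ).aemeasurable]
  obtain ⟨K, hK, hJ⟩ := J_bound d hd γ hγ
  set θ : ℝ := (m:ℝ)/(m+1) with hθ
  have hθ0 : 0 ≤ θ := by positivity
  set ψ : ℝ → ENNReal := fun z => ENNReal.ofReal (min 1 (K * C * Real.exp (-a * z))) ^ θ with hψ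
  have hψm : Measurable ψ := by rw [hψ]; fun_prop
  have hx : ∀ v : Fin (m+1) → ℝ, ∫⁻ x, domF (d := d) a γ C σ v x ∂(Measure.pi fun _ : Fin (m+1) => (volume : Measure (Torus d)))
      ≤ ∏ i, ψ (cycLin σ v i) := by
    intro v
    refine geom_mean m _ (fun i => ENNReal.ofReal (min 1 (K * C * Real.exp (-a * (cycLin σ v i))))) ?_ ?_ ?_
    · intro i
      have : 0 < min 1 (K * C * Real.exp (-a * (cycLin σ v i))) := lt_min one_pos (by positivity)
      simpa using this
    · intro i; exact ENNReal.ofReal_ne_top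
    · intro e
      refine cycle_lint volume m σ (fun i x y => ENNReal.ofReal (min 1 ((C * Real.exp (-a * (v (σ i) + v (σ (i+1)))) / dist x y ^ d) ^ γ)))
        (fun i => ?_) (fun i x y => ?_) _ (fun i y => ?_) e
      · simp only [Function.uncurry_def]; fun_prop
      · rw [← ENNReal.ofReal_one]
        exact ENNReal.ofReal_le_ofReal (min_le_left _ _)
      · have := hJ (C * Real.exp (-a * (v (σ i) + v (σ (i+1))))) (by positivity) y
        rw [← mul_assoc] at this
        exact this
  refine lt_of_le_of_lt (lintegral_mono hx) ?_
  have hlin : Measurable (cycLin σ) := by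
    refine measurable_pi_iff.2 fun i => ?_
    simp only [cycLin, LinearMap.coe_mk, AddHom.coe_mk]; fun_prop
  have hψ2 : Measurable fun v => ∏ i, ψ (cycLin σ v i) :=
    Finset.measurable_prod _ fun i _ => hψm.comp ((measurable_pi_apply i).comp hlin)
  rw [pi_expM, lintegral_withDensity_eq_lintegral_mul _ (by fun_prop) hψ2]
  set Φ : (Fin (m+1) → ℝ) → ENNReal := fun z => ∏ i, (ENNReal.ofReal (Real.exp (z i/2)) * ψ (z i)) with hΦ
  have hΦm : Measurable Φ := Finset.measurable_prod _ fun i _ =>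
    Measurable.mul (by fun_prop) (hψm.comp (measurable_pi_apply i))
  have e1 : ∀ v : Fin (m+1) → ℝ, ((fun v : Fin (m+1) → ℝ => ∏ i, ENNReal.ofReal (Real.exp (v i))) * fun v => ∏ i, ψ (cycLin σ v i)) v
      = Φ (cycLin σ v) := by
    intro v
    simp only [Pi.mul_apply, hΦ]
    rw [Finset.prod_mul_distrib]
    congr 1
    rw [← ENNReal.ofReal_prod_of_nonneg (fun i _ => (Real.exp_pos _).le),
      ← ENNReal.ofReal_prod_of_nonneg (fun i _ => (Real.exp_pos _).le), ← Real.exp_sum, ← Real.exp_sum]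
    congr 2
    simp only [cycLin, LinearMap.coe_mk, AddHom.coe_mk]
    rw [← Finset.sum_div, Finset.sum_add_distrib]
    have h2 : ∑ i, v (σ i) = ∑ i, v i := Equiv.sum_comp σ v
    have h3 : ∑ i, v (σ (i+1)) = ∑ i, v i := Equiv.sum_comp ((Equiv.addRight 1).trans σ) v
    rw [h2, h3]; ring
  rw [lintegral_congr e1, ← lintegral_map hΦm hlin,
    Measure.map_linearMap_addHaar_eq_smul_addHaar _ (cycLin_det hodd σ), lintegral_smul_measure]
  refine ENNReal.mul_lt_top ENNReal.ofReal_lt_top ?_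
  rw [volume_pi, hΦ, lint_prod _ _ (fun _ z => ENNReal.ofReal (Real.exp (z/2)) * ψ z)
    (fun i => Measurable.mul (by fun_prop) hψm)]
  refine ENNReal.prod_lt_top fun i _ => ?_
  exact phi_int a θ (K * C) ha hθ0 h (by positivity)


def prS (γ M : ℝ) {d k : ℕ} (Q : Fin k → ℝ) (x : Fin k → Torus d) : Sym2 (Fin k) → ℝ :=
  Sym2.lift ⟨fun i j => min 1 ((Q i * Q j / (M * dist (x i) (x j) ^ d)) ^ γ), fun i j => by
    dsimp only; rw [mul_comm (Q i), dist_comm]⟩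

lemma prS_mk (γ M : ℝ) {d k : ℕ} (Q : Fin k → ℝ) (x : Fin k → Torus d) (i j : Fin k) :
    prS γ M Q x s(i, j) = min 1 ((Q i * Q j / (M * dist (x i) (x j) ^ d)) ^ γ) := rfl

open scoped Classical in
def coinSet (s : StarKind) {k : ℕ} (H : SimpleGraph (Fin k)) (e : Sym2 (Fin k)) (p : ℝ) : Set ℝ :=
  if e ∈ H.edgeSet then Set.Iic p else
    match s with
    | .sub => Set.univ
    | .ind => if e.IsDiag then Set.univ else Set.Ioi p

def Pat (s : StarKind) {k : ℕ} (d : ℕ) (H : SimpleGraph (Fin k)) (γ M : ℝ) : Set (GirgΩ d k) :=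
  {ω | ∀ e, ω.2.2 e ∈ coinSet s H e (prS γ M ω.1 ω.2.1 e)}

open scoped Classical in
def facE (s : StarKind) {k : ℕ} (H : SimpleGraph (Fin k)) (e : Sym2 (Fin k)) (p : ℝ) : ENNReal :=
  if e ∈ H.edgeSet then ENNReal.ofReal p else
    match s with
    | .sub => 1
    | .ind => if e.IsDiag then 1 else ENNReal.ofReal (1 - p)

def GG (s : StarKind) {k d : ℕ} (H : SimpleGraph (Fin k)) (γ M : ℝ) (w : Fin k → ℝ) (x : Fin k → Torus d) : ENNReal :=
  ∏ e, facE s H e (prS γ M w x e)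

instance unifProb : IsProbabilityMeasure (volume.restrict (Set.Icc (0:ℝ) 1)) := ⟨by simp⟩

instance girgProb (μW : Measure ℝ) [IsProbabilityMeasure μW] (d n : ℕ) : IsProbabilityMeasure (girgMeasure μW d n) := by
  unfold girgMeasure; infer_instance

lemma coinSet_vol (s : StarKind) {k : ℕ} (H : SimpleGraph (Fin k)) (e : Sym2 (Fin k)) (p : ℝ)
    (h0 : 0 ≤ p) (h1 : p ≤ 1) : (volume.restrict (Set.Icc (0:ℝ) 1)) (coinSet s H e p) = facE s H e p := by
  have a1 : (volume.restrict (Set.Icc (0:ℝ) 1)) (Set.Iic p) = ENNReal.ofReal p := by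
    rw [Measure.restrict_apply measurableSet_Iic]
    have : Set.Iic p ∩ Set.Icc 0 1 = Set.Icc 0 p := by
      ext y; simp only [Set.mem_inter_iff, Set.mem_Iic, Set.mem_Icc]
      constructor
      · rintro ⟨h, h2, h3⟩; exact ⟨h2, h⟩
      · rintro ⟨h, h2⟩; exact ⟨h2, h, by linarith⟩
    rw [this]; simp
  have a2 : (volume.restrict (Set.Icc (0:ℝ) 1)) (Set.Ioi p) = ENNReal.ofReal (1 - p) := by
    rw [Measure.restrict_apply measurableSet_Ioi]
    have : Set.Ioi p ∩ Set.Icc 0 1 = Set.Ioc p 1 := by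
      ext y; simp only [Set.mem_inter_iff, Set.mem_Ioi, Set.mem_Icc, Set.mem_Ioc]
      constructor
      · rintro ⟨h, h2, h3⟩; exact ⟨h, h3⟩
      · rintro ⟨h, h2⟩; exact ⟨h, by linarith, h2⟩
    rw [this]; simp
  unfold coinSet facE
  cases s
  · dsimp only; split_ifs
    · exact a1
    · exact measure_univ
    · exact a2
  · dsimp only; split_ifs
    · exact a1
    · exact measure_univ

lemma facE_le_one (s : StarKind) {k : ℕ} (H : SimpleGraph (Fin k)) (e : Sym2 (Fin k)) (p : ℝ)
    (h0 : 0 ≤ p) (h1 : p ≤ 1) : facE s H e p ≤ 1 := by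
  rw [← coinSet_vol s H e p h0 h1]; exact prob_le_one

lemma facE_cont (s : StarKind) {k : ℕ} (H : SimpleGraph (Fin k)) (e : Sym2 (Fin k)) :
    Continuous (facE s H e) := by
  unfold facE
  cases s
  · dsimp only; split_ifs
    · exact ENNReal.continuous_ofReal
    · exact continuous_const
    · exact ENNReal.continuous_ofReal.comp (by fun_prop)
  · dsimp only; split_ifs
    · exact ENNReal.continuous_ofReal
    · exact continuous_const

lemma prS_meas (γ M : ℝ) {d k : ℕ} (e : Sym2 (Fin k)) :
    Measurable fun z : (Fin k → ℝ) × (Fin k → Torus d) => prS γ M z.1 z.2 e := by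
  induction e using Sym2.ind with
  | _ i j => simp only [prS_mk]; fun_prop

lemma prS_le_one (γ M : ℝ) {d k : ℕ} (Q : Fin k → ℝ) (x : Fin k → Torus d) (e : Sym2 (Fin k)) :
    prS γ M Q x e ≤ 1 := by
  induction e using Sym2.ind with
  | _ i j => exact min_le_left _ _

lemma prS_nonneg (γ M : ℝ) (hM : 0 ≤ M) {d k : ℕ} (Q : Fin k → ℝ) (hQ : ∀ i, 0 ≤ Q i) (x : Fin k → Torus d) (e : Sym2 (Fin k)) :
    0 ≤ prS γ M Q x e := by
  induction e using Sym2.ind with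
  | _ i j =>
    refine le_min zero_le_one (Real.rpow_nonneg ?_ _)
    have := hQ i; have := hQ j
    positivity

lemma GG_meas (s : StarKind) {k d : ℕ} (H : SimpleGraph (Fin k)) (γ M : ℝ) :
    Measurable fun z : (Fin k → ℝ) × (Fin k → Torus d) => GG s H γ M z.1 z.2 :=
  Finset.measurable_prod _ fun e _ => (facE_cont s H e).measurable.comp (prS_meas γ M e)

lemma coinSet_meas (s : StarKind) {k : ℕ} (H : SimpleGraph (Fin k)) (e : Sym2 (Fin k)) {X : Type*} [MeasurableSpace X]
    (f g : X → ℝ) (hf : Measurable f) (hg : Measurable g) : MeasurableSet {z | f z ∈ coinSet s H e (g z)} := by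
  unfold coinSet
  cases s
  · dsimp only; split_ifs
    · exact measurableSet_le hf hg
    · simp
    · exact measurableSet_lt hg hf
  · dsimp only; split_ifs
    · exact measurableSet_le hf hg
    · simp

lemma Pat_meas (s : StarKind) {k d : ℕ} (H : SimpleGraph (Fin k)) (γ M : ℝ) : MeasurableSet (Pat s d H γ M) := by
  have : Pat s d H γ M = ⋂ e, {ω | ω.2.2 e ∈ coinSet s H e (prS γ M ω.1 ω.2.1 e)} := by
    ext ω; simp only [Pat, Set.mem_iInter, Set.mem_setOf_eq]
  rw [this]
  refine MeasurableSet.iInter fun e => ?_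
  refine coinSet_meas s H e _ _ ?_ ?_
  · exact (measurable_pi_apply e).comp (measurable_snd.comp measurable_snd)
  · have h0 := prS_meas (d := d) γ M e
    have hp : Measurable (fun ω : GirgΩ d k => (ω.1, ω.2.1)) :=
      measurable_fst.prodMk (measurable_fst.comp measurable_snd)
    have h3 := h0.comp hp
    simpa only [Function.comp_def] using h3

lemma pat_prob (s : StarKind) {k d : ℕ} (H : SimpleGraph (Fin k)) (γ M : ℝ) (hM : 0 ≤ M) (μW : Measure ℝ)
    [IsProbabilityMeasure μW] (h1 : μW (Set.Iio 1) = 0) (S : Set (Fin k → ℝ)) (hS : MeasurableSet S) :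
    girgMeasure μW d k (Pat s d H γ M ∩ {ω | ω.1 ∈ S}) =
      ∫⁻ z, S.indicator 1 z.1 * GG s H γ M z.1 z.2 ∂((Measure.pi fun _ : Fin k => μW).prod
    (Measure.pi fun _ : Fin k => (volume : Measure (Torus d)))) := by
  have hm : MeasurableSet (Pat s d H γ M ∩ {ω | ω.1 ∈ S}) :=
    (Pat_meas s H γ M).inter (measurable_fst hS)
  have hi : Measurable (S.indicator (1 : (Fin k → ℝ) → ENNReal)) := measurable_one.indicator hS
  have hmm : Measurable fun z : (Fin k → ℝ) × (Fin k → Torus d) => S.indicator 1 z.1 * GG s H γ M z.1 z.2 :=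
    (hi.comp measurable_fst).mul (GG_meas s H γ M)
  rw [girgMeasure, Measure.prod_apply hm, lintegral_prod _ hmm.aemeasurable]
  have hae : ∀ᵐ w ∂(Measure.pi fun _ : Fin k => μW), ∀ i, 0 ≤ w i := by
    rw [ae_all_iff]; intro i
    have : ∀ᵐ y ∂μW, (0:ℝ) ≤ y := by
      refine measure_mono_null ?_ h1
      intro y hy
      simp only [Set.mem_compl_iff, Set.mem_setOf_eq, not_le] at hy
      exact lt_trans hy one_pos
    exact (measurePreserving_eval (fun _ : Fin k => μW) i).quasiMeasurePreserving.ae this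
  refine lintegral_congr_ae ?_
  filter_upwards [hae] with w hw
  rw [Measure.prod_apply (measurable_prodMk_left hm)]
  refine lintegral_congr fun x => ?_
  by_cases hwS : w ∈ S
  · have : Prod.mk x ⁻¹' (Prod.mk w ⁻¹' (Pat s d H γ M ∩ {ω | ω.1 ∈ S}))
        = Set.univ.pi fun e => coinSet s H e (prS γ M w x e) := by
      ext y; simp [Pat, hwS]
    rw [this, Measure.pi_pi]
    simp only [hwS, Set.indicator_of_mem, Pi.one_apply, one_mul, GG]
    exact Finset.prod_congr rfl fun e _ => coinSet_vol s H e _ (prS_nonneg γ M hM w hw x e) (prS_le_one ..)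
  · have : Prod.mk x ⁻¹' (Prod.mk w ⁻¹' (Pat s d H γ M ∩ {ω | ω.1 ∈ S})) = ∅ := by
      ext y; simp [hwS]
    rw [this]; simp [hwS]

lemma GG_le {m d : ℕ} (hm : 3 ≤ m + 1) (s : StarKind) (H : SimpleGraph (Fin (m+1))) (σ : Equiv.Perm (Fin (m+1)))
    (hH : ∀ i, H.Adj (σ i) (σ (i+1))) (γ M : ℝ) (hM : 0 ≤ M) (w : Fin (m+1) → ℝ) (hw : ∀ i, 0 ≤ w i)
    (x : Fin (m+1) → Torus d) :
    GG s H γ M w x ≤ ∏ i, ENNReal.ofReal (min 1 ((w (σ i) * w (σ (i+1)) / (M * dist (x (σ i)) (x (σ (i+1))) ^ d)) ^ γ)) := by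
  classical
  have hinj := cycle_inj hm σ
  have e1 : ∏ i, ENNReal.ofReal (min 1 ((w (σ i) * w (σ (i+1)) / (M * dist (x (σ i)) (x (σ (i+1))) ^ d)) ^ γ))
      = ∏ e ∈ Finset.univ.image (fun i => s(σ i, σ (i+1))), facE s H e (prS γ M w x e) := by
    rw [Finset.prod_image (fun a _ b _ h => hinj h)]
    refine Finset.prod_congr rfl fun i _ => ?_
    unfold facE; rw [if_pos (by simpa using hH i), prS_mk]
  rw [e1, GG, ← Finset.prod_mul_prod_compl (Finset.univ.image (fun i => s(σ i, σ (i+1))))]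
  refine mul_le_of_le_one_right' (Finset.prod_le_one' fun e _ => ?_)
  exact facE_le_one s H e _ (prS_nonneg γ M hM w hw x e) (prS_le_one ..)



def Ln (τ : ℝ) (n : ℕ) : ℝ := (τ - 1) / 2 * Real.log n

lemma pi_smul_const {k : ℕ} (μ : Measure ℝ) [IsProbabilityMeasure μ] (r : ℝ) :
    Measure.pi (fun _ : Fin k => ENNReal.ofReal r • μ) = (ENNReal.ofReal r)^k • Measure.pi (fun _ : Fin k => μ) := by
  have : IsFiniteMeasure (ENNReal.ofReal r • μ) := Measure.smul_finite μ ENNReal.ofReal_ne_top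
  refine Measure.pi_eq fun s hs => ?_
  simp [Measure.pi_pi, Finset.prod_mul_distrib]

lemma lint_change {τ c : ℝ} (hτ : 2 < τ) {μ : Measure ℝ} [IsProbabilityMeasure μ] (hW : WeightTail τ c μ)
    {k : ℕ} {X : Type*} [MeasurableSpace X] (ν : Measure X) [SFinite ν] (L : ℝ)
    (F : (Fin k → ℝ) × X → ENNReal) (hF : Measurable F) :
    (ENNReal.ofReal (Real.exp L))^k * ∫⁻ z, F z ∂((Measure.pi fun _ : Fin k => μ).prod ν) =
    ∫⁻ z, (Set.univ.pi fun _ : Fin k => Set.Iio L).indicator 1 z.1 * F (fun i => qf μ (z.1 i - L), z.2)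
      ∂((Measure.pi fun _ : Fin k => expM).prod ν) := by
  have hq : Measurable fun v => qf μ (v - L) := (qf_measurable hτ hW).comp (by fun_prop)
  have hqq : Measurable fun (v : Fin k → ℝ) i => qf μ (v i - L) :=
    measurable_pi_iff.2 fun i => hq.comp (measurable_pi_apply i)
  have hS : MeasurableSet (Set.univ.pi fun _ : Fin k => Set.Iio L) := MeasurableSet.univ_pi fun _ => measurableSet_Iio
  have hF2 : Measurable fun z : (Fin k → ℝ) × X => (Set.univ.pi fun _ : Fin k => Set.Iio L).indicator (1 : (Fin k → ℝ) → ENNReal) z.1 * F (fun i => qf μ (z.1 i - L), z.2) := by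
    refine ((measurable_one.indicator hS).comp measurable_fst).mul (hF.comp ?_)
    exact (hqq.comp measurable_fst).prodMk measurable_snd
  rw [lintegral_prod _ hF.aemeasurable, lintegral_prod _ hF2.aemeasurable]
  have hG : Measurable fun w : Fin k → ℝ => ∫⁻ x, F (w, x) ∂ν := hF.lintegral_prod_right'
  have key : (ENNReal.ofReal (Real.exp L))^k • Measure.pi (fun _ : Fin k => μ)
      = Measure.map (fun (v : Fin k → ℝ) i => qf μ (v i - L))
        ((Measure.pi fun _ : Fin k => expM).restrict (Set.univ.pi fun _ : Fin k => Set.Iio L)) := by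
    rw [← pi_smul_const, ← map_qf hτ hW L, Measure.restrict_pi_pi]
    have : IsFiniteMeasure (Measure.map (fun v => qf μ (v - L)) (expM.restrict (Set.Iio L))) := by
      rw [map_qf hτ hW L]; exact Measure.smul_finite μ ENNReal.ofReal_ne_top
    exact (Measure.pi_map_pi (fun i => hq.aemeasurable)).symm
  rw [← smul_eq_mul, ← lintegral_smul_measure, key, lintegral_map hG hqq, ← lintegral_indicator hS]
  refine lintegral_congr fun v => ?_
  by_cases hv : v ∈ (Set.univ.pi fun _ : Fin k => Set.Iio L)
  · simp only [Set.indicator_of_mem hv, Pi.one_apply, one_mul]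
  · simp only [Set.indicator_of_notMem hv, zero_mul, lintegral_zero]

def Iinf (s : StarKind) {k : ℕ} (d : ℕ) (H : SimpleGraph (Fin k)) (τ γ c M : ℝ) : ENNReal :=
  ∫⁻ z, GG s H γ M (fun i => c ^ (1/(τ-1)) * Real.exp (-(1/(τ-1)) * z.1 i)) z.2
    ∂((Measure.pi fun _ : Fin k => expM).prod (Measure.pi fun _ : Fin k => (volume : Measure (Torus d))))

lemma facE_ne_top (s : StarKind) {k : ℕ} (H : SimpleGraph (Fin k)) (e : Sym2 (Fin k)) (p : ℝ) : facE s H e p ≠ ⊤ := by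
  unfold facE
  cases s
  · dsimp only; split_ifs <;> simp
  · dsimp only; split_ifs <;> simp

lemma GG_cont (s : StarKind) {k d : ℕ} (H : SimpleGraph (Fin k)) (γ M : ℝ) (hγ : 1 < γ) (x : Fin k → Torus d) :
    Continuous fun w : Fin k → ℝ => GG s H γ M w x := by
  unfold GG
  rw [continuous_iff_continuousAt]
  intro w
  refine ENNReal.tendsto_finsetProd_of_ne_top _ (fun e _ => ?_) (fun e _ => facE_ne_top s H e _)
  refine (((facE_cont s H e).comp ?_).tendsto w)
  induction e using Sym2.ind with
  | _ i j =>
    simp only [prS_mk]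
    refine continuous_const.min (Continuous.rpow_const (by fun_prop) fun _ => Or.inr (by linarith))

lemma GG_scale (s : StarKind) {k d : ℕ} (H : SimpleGraph (Fin k)) (γ M : ℝ) (n : ℕ) (w : Fin k → ℝ) (x : Fin k → Torus d) :
    GG s H γ (n * M) w x = GG s H γ M (fun i => w i / Real.sqrt n) x := by
  unfold GG
  refine Finset.prod_congr rfl fun e _ => ?_
  congr 1
  induction e using Sym2.ind with
  | _ i j =>
    rw [prS_mk, prS_mk]
    congr 2
    rw [div_mul_div_comm, Real.mul_self_sqrt (by positivity), div_div, mul_assoc]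

lemma exp_Ln {τ : ℝ} (hτ : 2 < τ) (n : ℕ) (hn : 0 < n) : Real.exp (1/(τ-1) * Ln τ n) = Real.sqrt n := by
  have hn' : (0:ℝ) < n := by exact_mod_cast hn
  rw [Ln, Real.sqrt_eq_rpow, Real.rpow_def_of_pos hn']
  congr 1
  have : τ - 1 ≠ 0 := by linarith
  field_simp

lemma Ln_tendsto {τ : ℝ} (hτ : 2 < τ) : Tendsto (Ln τ) atTop atTop := by
  unfold Ln
  exact (Real.tendsto_log_atTop.comp tendsto_natCast_atTop_atTop).const_mul_atTop (by linarith)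

lemma qn_tendsto {τ c : ℝ} (hτ : 2 < τ) {μ : Measure ℝ} [IsProbabilityMeasure μ] (hW : WeightTail τ c μ) (v : ℝ) :
    Tendsto (fun n : ℕ => qf μ (v - Ln τ n) / Real.sqrt n) atTop
      (nhds (c ^ (1/(τ-1)) * Real.exp (-(1/(τ-1)) * v))) := by
  have h1 : Tendsto (fun n : ℕ => v - Ln τ n) atTop atBot :=
    tendsto_atBot_add_const_left _ v (tendsto_neg_atTop_atBot.comp (Ln_tendsto hτ))
  have h2 := ((qf_asymp hτ hW).comp h1).mul_const (Real.exp (-(1/(τ-1)) * v))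
  refine h2.congr' ?_
  filter_upwards [eventually_gt_atTop 0] with n hn
  simp only [Function.comp]
  rw [← exp_Ln hτ n hn, mul_assoc, ← Real.exp_add, div_eq_mul_inv (qf μ _), ← Real.exp_neg]
  congr 2; ring

lemma Iinf_pos (s : StarKind) {k d : ℕ} (hd : 1 ≤ d) (H : SimpleGraph (Fin k)) (τ γ c M : ℝ) (hτ : 2 < τ)
    (hc : 0 < c) (hM : 0 < M) (hγ : 1 < γ) : 0 < Iinf s d H τ γ c M := by
  unfold Iinf
  set a := 1/(τ-1) with ha
  have ha0 : 0 < a := by rw [ha]; apply one_div_pos.2; linarith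
  have hmeas : Measurable fun z : (Fin k → ℝ) × (Fin k → Torus d) =>
      GG s H γ M (fun i => c ^ a * Real.exp (-a * z.1 i)) z.2 := by
    have hp : Measurable fun z : (Fin k → ℝ) × (Fin k → Torus d) =>
      ((fun i => c ^ a * Real.exp (-a * z.1 i)), z.2) := by fun_prop
    have := (GG_meas (d := d) s H γ M).comp hp
    simpa only [Function.comp_def] using this
  rw [lintegral_pos_iff_support hmeas]
  set U : Set ((Fin k → ℝ) × (Fin k → Torus d)) := ⋂ i, ⋂ j, ⋂ (_ : i ≠ j),
    {z | c ^ a * Real.exp (-a * z.1 i) * (c ^ a * Real.exp (-a * z.1 j)) < M * dist (z.2 i) (z.2 j) ^ d} with hU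
  have hUo : IsOpen U := by
    refine isOpen_iInter_of_finite fun i => isOpen_iInter_of_finite fun j => isOpen_iInter_of_finite fun _ => ?_
    exact isOpen_lt (by fun_prop) (by fun_prop)
  have hUn : U.Nonempty := by
    have : Infinite (AddCircle (1:ℝ)) := by
      have : Infinite (Set.Ico (0:ℝ) (0+1)) := (Set.Ico_infinite (by norm_num)).to_subtype
      exact Infinite.of_injective _ (AddCircle.equivIco (1:ℝ) 0).symm.injective
    have : Nonempty (Fin d) := ⟨⟨0, hd⟩⟩
    have : Infinite (Torus d) := Pi.infinite_of_right
    let f : ℕ ↪ Torus d := Infinite.natEmbedding _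
    have h1 : ∀ᶠ V : ℝ in atTop, ∀ i j : Fin k, i ≠ j →
        c ^ a * Real.exp (-a * V) * (c ^ a * Real.exp (-a * V)) < M * dist (f i) (f j) ^ d := by
      rw [eventually_all]; intro i
      rw [eventually_all]; intro j
      by_cases hij : i = j
      · simp [hij]
      · have hlim : Tendsto (fun V => c ^ a * Real.exp (-a * V)) atTop (nhds (c^a * 0)) := by
          refine Tendsto.const_mul _ (Real.tendsto_exp_atBot.comp ?_)
          exact tendsto_id.const_mul_atTop_of_neg (by linarith)
        have hpos : 0 < M * dist (f i) (f j) ^ d := by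
          have : 0 < dist (f i) (f j) := dist_pos.2 fun h => hij (Fin.ext (f.injective h))
          positivity
        have h2 := hlim.mul hlim
        filter_upwards [h2.eventually_lt_const (by simpa using hpos)] with V hV _
        exact hV
    obtain ⟨V, hV⟩ := h1.exists
    refine ⟨(fun _ => V, fun i => f i), ?_⟩
    simp only [hU, Set.mem_iInter]
    exact fun i j hij => hV i j hij
  have : (expM).IsOpenPosMeasure := by
    have : (volume : Measure ℝ) ≪ expM := by
      unfold expM
      refine withDensity_absolutelyContinuous' (by fun_prop) (ae_of_all _ fun v => ?_)
      simp [Real.exp_pos]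
    exact this.isOpenPosMeasure
  refine lt_of_lt_of_le (hUo.measure_pos _ hUn) (measure_mono ?_)
  intro z hz
  simp only [hU, Set.mem_iInter] at hz
  rw [Function.mem_support]
  unfold GG
  refine Finset.prod_ne_zero_iff.2 fun e _ => ?_
  induction e using Sym2.ind with
  | _ i j =>
    have key : i ≠ j → 0 < prS γ M (fun i => c ^ a * Real.exp (-a * z.1 i)) z.2 s(i,j) ∧
        prS γ M (fun i => c ^ a * Real.exp (-a * z.1 i)) z.2 s(i,j) < 1 := by
      intro hij
      have h1 : c ^ a * Real.exp (-a * z.1 i) * (c ^ a * Real.exp (-a * z.1 j)) < M * dist (z.2 i) (z.2 j) ^ d := hz i j hij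
      have hca : 0 < c ^ a := Real.rpow_pos_of_pos hc a
      have h2 : 0 < c ^ a * Real.exp (-a * z.1 i) * (c ^ a * Real.exp (-a * z.1 j)) := by positivity
      rw [prS_mk]
      have h3 : 0 < c ^ a * Real.exp (-a * z.1 i) * (c ^ a * Real.exp (-a * z.1 j)) / (M * dist (z.2 i) (z.2 j) ^ d) := div_pos h2 (h2.trans h1)
      refine ⟨lt_min one_pos (Real.rpow_pos_of_pos h3 _), min_lt_of_right_lt ?_⟩
      refine Real.rpow_lt_one h3.le ?_ (by linarith)
      rw [div_lt_one (h2.trans h1)]; exact h1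
    unfold facE
    by_cases hadj : H.Adj i j
    · rw [if_pos (by simpa using hadj)]
      have := (key hadj.ne).1
      simpa using this
    · rw [if_neg (by simpa using hadj)]
      cases s
      · dsimp only; split_ifs with hdg
        · exact one_ne_zero
        · have := (key (by simpa using hdg)).2
          simpa using this
      · exact one_ne_zero


lemma pat_lim {m d : ℕ} (hd : 1 ≤ d) (hm : 3 ≤ m+1) (s : StarKind) (H : SimpleGraph (Fin (m+1))) (σ : Equiv.Perm (Fin (m+1)))
    (hH : ∀ i, H.Adj (σ i) (σ (i+1))) (hodd : Odd (m+1)) (τ γ c : ℝ) (hτ : 2 < τ) (hγ : 1 < γ)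
    (hk : 1/2 < 1/(τ-1) * ((m:ℝ)/(m+1)))
    {μ : Measure ℝ} [IsProbabilityMeasure μ] (hW : WeightTail τ c μ) :
    Iinf s d H τ γ c (wMean μ) < ⊤ ∧ 
    ∀ S : ℕ → Set (Fin (m+1) → ℝ), (∀ n, MeasurableSet (S n)) → 
      (∀ v : Fin (m+1) → ℝ, ∀ᶠ n in atTop, (fun i => qf μ (v i - Ln τ n)) ∈ S n) →
      Tendsto (fun n : ℕ => (ENNReal.ofReal (Real.exp (Ln τ n)))^(m+1) *
        girgMeasure μ d (m+1) (Pat s d H γ (n * wMean μ) ∩ {ω | ω.1 ∈ S n})) atTop (nhds (Iinf s d H τ γ c (wMean μ))) := by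
  have hM := wMean_pos hτ hW
  obtain ⟨C1, hC1, hq⟩ := qf_le hτ hW
  set M := wMean μ with hMd
  set a := 1/(τ-1) with ha
  have ha0 : 0 < a := by rw [ha]; apply one_div_pos.2; linarith
  have hfin := dom_finite (d := d) hd a γ (C1^2/M) ha0 hk hγ (by positivity) σ hodd
  have hL0 : ∀ v : Fin (m+1) → ℝ, ∀ᶠ n in atTop, v ∈ Set.univ.pi fun _ : Fin (m+1) => Set.Iio (Ln τ n) := by
    intro v
    have : ∀ᶠ n in atTop, ∀ i, v i < Ln τ n := by
      rw [eventually_all]; intro i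
      exact (Ln_tendsto hτ).eventually_gt_atTop _
    filter_upwards [this] with n hn i _ using hn i
  have hlim : ∀ (v : Fin (m+1) → ℝ) (x : Fin (m+1) → Torus d),
      Tendsto (fun n : ℕ => GG s H γ (n * M) (fun i => qf μ (v i - Ln τ n)) x) atTop
        (nhds (GG s H γ M (fun i => c ^ a * Real.exp (-a * v i)) x)) := by
    intro v x
    simp only [GG_scale]
    exact ((GG_cont s H γ M hγ x).tendsto _).comp (tendsto_pi_nhds.2 fun i => qn_tendsto hτ hW (v i))
  have hle : ∀ n : ℕ, 0 < n → ∀ (v : Fin (m+1) → ℝ) (x : Fin (m+1) → Torus d),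
      v ∈ (Set.univ.pi fun _ : Fin (m+1) => Set.Iio (Ln τ n)) →
      GG s H γ (n * M) (fun i => qf μ (v i - Ln τ n)) x ≤ domF a γ (C1^2/M) σ v x := by
    intro n hn v x hv
    have hn' : (0:ℝ) < n := by exact_mod_cast hn
    have hq0 : ∀ i, 0 ≤ qf μ (v i - Ln τ n) / Real.sqrt n := fun i =>
      div_nonneg (zero_le_one.trans (one_le_qf hτ hW _)) (Real.sqrt_nonneg _)
    have hq1 : ∀ i, qf μ (v i - Ln τ n) / Real.sqrt n ≤ C1 * Real.exp (-a * v i) := by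
      intro i
      rw [div_le_iff₀ (Real.sqrt_pos.2 hn'), ← exp_Ln hτ n hn, mul_assoc, ← Real.exp_add]
      refine (hq _ (sub_neg.2 (hv i trivial))).trans (le_of_eq ?_)
      congr 2; ring
    rw [GG_scale]
    refine (GG_le hm s H σ hH γ M hM.le _ hq0 x).trans ?_
    unfold domF
    refine Finset.prod_le_prod' fun i _ => ENNReal.ofReal_le_ofReal (min_le_min le_rfl ?_)
    have hb : ∀ i, 0 ≤ C1 * Real.exp (-a * v i) := fun i => by positivity
    refine Real.rpow_le_rpow (div_nonneg (mul_nonneg (hq0 _) (hq0 _)) (by positivity)) ?_ (by linarith)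
    rw [← div_div]
    refine div_le_div_of_nonneg_right ?_ (by positivity)
    calc _ ≤ (C1 * Real.exp (-a * v (σ i))) * (C1 * Real.exp (-a * v (σ (i+1)))) / M :=
          div_le_div_of_nonneg_right (mul_le_mul (hq1 _) (hq1 _) (hq0 _) (hb _)) hM.le
      _ = _ := by
          rw [mul_add, Real.exp_add]; ring
  have hlimle : ∀ z : (Fin (m+1) → ℝ) × (Fin (m+1) → Torus d),
      GG s H γ M (fun i => c ^ a * Real.exp (-a * z.1 i)) z.2 ≤ domF a γ (C1^2/M) σ z.1 z.2 := by
    intro z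
    refine le_of_tendsto (hlim z.1 z.2) ?_
    filter_upwards [hL0 z.1, eventually_gt_atTop 0] with n h1 h2 using hle n h2 _ _ h1
  refine ⟨lt_of_le_of_lt (lintegral_mono hlimle) hfin, ?_⟩
  intro S hS hSe
  have hGm : ∀ n : ℕ, Measurable fun z : (Fin (m+1) → ℝ) × (Fin (m+1) → Torus d) =>
      (S n).indicator 1 z.1 * GG s H γ (n * M) z.1 z.2 := fun n =>
    ((measurable_one.indicator (hS n)).comp measurable_fst).mul (GG_meas s H γ _)
  have hqm : ∀ n : ℕ, Measurable fun z : (Fin (m+1) → ℝ) × (Fin (m+1) → Torus d) =>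
      ((fun i => qf μ (z.1 i - Ln τ n)), z.2) := fun n =>
    (measurable_pi_iff.2 fun i => (qf_measurable hτ hW).comp (((measurable_pi_apply i).comp measurable_fst).sub_const _)).prodMk measurable_snd
  have hLm : ∀ n, MeasurableSet (Set.univ.pi fun _ : Fin (m+1) => Set.Iio (Ln τ n)) := fun n =>
    MeasurableSet.univ_pi fun _ => measurableSet_Iio
  have e1 : ∀ n : ℕ, (ENNReal.ofReal (Real.exp (Ln τ n)))^(m+1) *
        girgMeasure μ d (m+1) (Pat s d H γ (n * M) ∩ {ω | ω.1 ∈ S n}) = 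
      ∫⁻ z, (Set.univ.pi fun _ : Fin (m+1) => Set.Iio (Ln τ n)).indicator 1 z.1 *
        ((S n).indicator 1 (fun i => qf μ (z.1 i - Ln τ n)) * GG s H γ (n * M) (fun i => qf μ (z.1 i - Ln τ n)) z.2)
      ∂((Measure.pi fun _ : Fin (m+1) => expM).prod (Measure.pi fun _ : Fin (m+1) => (volume : Measure (Torus d)))) := by
    intro n
    rw [pat_prob s H γ _ (by positivity) μ hW.2.1 (S n) (hS n), lint_change hτ hW _ _ _ (hGm n)]
  simp only [e1]
  refine tendsto_lintegral_filter_of_dominated_convergence (fun z => domF a γ (C1^2/M) σ z.1 z.2) ?_ ?_ hfin.ne ?_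
  · refine Eventually.of_forall fun n => ?_
    refine ((measurable_one.indicator (hLm n)).comp measurable_fst).mul ?_
    have := (hGm n).comp (hqm n)
    simpa only [Function.comp_def] using this
  · filter_upwards [eventually_gt_atTop 0] with n hn
    refine ae_of_all _ fun z => ?_
    by_cases h1 : z.1 ∈ (Set.univ.pi fun _ : Fin (m+1) => Set.Iio (Ln τ n))
    · rw [Set.indicator_of_mem h1, Pi.one_apply, one_mul]
      refine le_trans ?_ (hle n hn z.1 z.2 h1)
      refine mul_le_of_le_one_left' ?_
      exact Set.indicator_le_self _ _ _
    · rw [Set.indicator_of_notMem h1]; simp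
  · refine ae_of_all _ fun z => ?_
    refine (hlim z.1 z.2).congr' ?_
    filter_upwards [hL0 z.1, hSe z.1] with n h1 h2
    rw [Set.indicator_of_mem h1, Set.indicator_of_mem h2]; simp



def Rv {d n k : ℕ} (v : Fin k → Fin n) (ω : GirgΩ d n) : GirgΩ d k :=
  (fun i => ω.1 (v i), fun i => ω.2.1 (v i), fun e => ω.2.2 (Sym2.map v e))

lemma Rv_mp {d n k : ℕ} (μ : Measure ℝ) [IsProbabilityMeasure μ] (v : Fin k → Fin n) (hv : Function.Injective v) :
    MeasurePreserving (Rv (d := d) v) (girgMeasure μ d n) (girgMeasure μ d k) := by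
  have h1 := precomp_mp μ v hv
  have h2 := precomp_mp (volume : Measure (Torus d)) v hv
  have h3 := precomp_mp (volume.restrict (Set.Icc (0:ℝ) 1)) (Sym2.map v) (Sym2.map.injective hv)
  exact h1.prod (h2.prod h3)

lemma pair_mp {ι κ X : Type*} [Fintype ι] [Fintype κ] [MeasurableSpace X] (ν : Measure X)
    [IsProbabilityMeasure ν] (f g : ι → κ) (hf : Function.Injective f) (hg : Function.Injective g)
    (hfg : ∀ i j, f i ≠ g j) :
    MeasurePreserving (fun (x : κ → X) => ((fun i => x (f i), fun i => x (g i)) : (ι → X) × (ι → X)))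
      (Measure.pi fun _ => ν) ((Measure.pi fun _ => ν).prod (Measure.pi fun _ => ν)) := by
  have h1 := precomp_mp ν (Sum.elim f g) (hf.sumElim hg hfg)
  have h2 := measurePreserving_sumPiEquivProdPi (X := fun _ : ι ⊕ ι => X) (fun _ => ν)
  exact h2.comp h1

lemma shuf_mp {A B C D : Type*} [MeasurableSpace A] [MeasurableSpace B] [MeasurableSpace C] [MeasurableSpace D]
    (a : Measure A) (b : Measure B) (c : Measure C) (d : Measure D) [IsProbabilityMeasure a] [IsProbabilityMeasure b]
    [IsProbabilityMeasure c] [IsProbabilityMeasure d] :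
    MeasurePreserving (fun z : (A × B) × (C × D) => ((z.1.1, z.2.1), (z.1.2, z.2.2)))
      ((a.prod b).prod (c.prod d)) ((a.prod c).prod (b.prod d)) := by
  have s1 : MeasurePreserving (fun z : (A × B) × (C × D) => (z.1.1, (z.1.2, z.2)))
      ((a.prod b).prod (c.prod d)) (a.prod (b.prod (c.prod d))) := measurePreserving_prodAssoc a b (c.prod d)
  have t1 : MeasurePreserving (fun z : B × (C × D) => ((z.1, z.2.1), z.2.2)) (b.prod (c.prod d)) ((b.prod c).prod d) :=
    (measurePreserving_prodAssoc b c d).symm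
  have t2 : MeasurePreserving (fun z : (B × C) × D => ((z.1.2, z.1.1), z.2)) ((b.prod c).prod d) ((c.prod b).prod d) :=
    (Measure.measurePreserving_swap (μ := b) (ν := c)).prod (MeasurePreserving.id d)
  have t3 : MeasurePreserving (fun z : (C × B) × D => (z.1.1, (z.1.2, z.2))) ((c.prod b).prod d) (c.prod (b.prod d)) :=
    measurePreserving_prodAssoc c b d
  have t := (MeasurePreserving.id a).prod (t3.comp (t2.comp t1))
  have s2 : MeasurePreserving (fun z : A × (C × (B × D)) => ((z.1, z.2.1), z.2.2)) (a.prod (c.prod (b.prod d)))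
    ((a.prod c).prod (b.prod d)) := (measurePreserving_prodAssoc a c (b.prod d)).symm
  exact s2.comp (t.comp s1)

lemma Rv_pair {d n k : ℕ} (μ : Measure ℝ) [IsProbabilityMeasure μ] (v v' : Fin k → Fin n) (hv : Function.Injective v)
    (hv' : Function.Injective v') (hd : ∀ i j, v i ≠ v' j) :
    MeasurePreserving (fun ω => (Rv (d := d) v ω, Rv v' ω)) (girgMeasure μ d n) ((girgMeasure μ d k).prod (girgMeasure μ d k)) := by
  have hd3 : ∀ e e' : Sym2 (Fin k), Sym2.map v e ≠ Sym2.map v' e' := by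
    intro e e' h
    induction e using Sym2.ind with
    | _ i j =>
    induction e' using Sym2.ind with
    | _ i' j' =>
    simp only [Sym2.map_mk, Sym2.eq_iff] at h
    rcases h with h | h
    · exact hd _ _ h.1
    · exact hd _ _ h.1
  have h1 := pair_mp μ v v' hv hv' hd
  have h2 := pair_mp (volume : Measure (Torus d)) v v' hv hv' hd
  have h3 := pair_mp (volume.restrict (Set.Icc (0:ℝ) 1)) (Sym2.map v) (Sym2.map v') (Sym2.map.injective hv) (Sym2.map.injective hv') hd3
  have h23 := (shuf_mp _ _ _ _).comp (h2.prod h3)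
  exact (shuf_mp _ _ _ _).comp (h1.prod h23)

lemma card_prob {ι : Type*} [Fintype ι] {n : ℕ} (μ : Measure ℝ) [IsProbabilityMeasure μ] (h : ℝ) (g : ι → Fin n) :
    (Measure.pi fun _ : Fin n => μ).real {w | ∀ i, h < w (g i)} = (μ.real (Set.Ioi h)) ^ (Finset.univ.image g).card := by
  classical
  have : {w : Fin n → ℝ | ∀ i, h < w (g i)} = Set.univ.pi fun u => if u ∈ Finset.univ.image g then Set.Ioi h else Set.univ := by
    ext w
    simp only [Set.mem_pi, Set.mem_univ, forall_const]
    constructor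
    · intro hw u
      split_ifs with hu
      · obtain ⟨i, _, rfl⟩ := Finset.mem_image.1 hu
        exact hw i
      · trivial
    · intro hw i
      have := hw (g i)
      rw [if_pos (Finset.mem_image_of_mem _ (Finset.mem_univ i))] at this
      exact this
  rw [this, measureReal_def, Measure.pi_pi, ENNReal.toReal_prod, ← Finset.prod_const]
  rw [← Finset.prod_subset (Finset.subset_univ (Finset.univ.image g))]
  · refine Finset.prod_congr rfl fun u hu => ?_
    rw [if_pos hu]; rfl
  · intro u _ hu
    rw [if_neg hu]; simp

lemma comb_fin (n r : ℕ) (p : ℝ) (hp0 : 0 ≤ p) :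
    ∑ g : Fin r → Fin n, p ^ (Finset.univ.image g).card ≤ (n * p + r) ^ r := by
  classical
  induction r with
  | zero => simp
  | succ r ih =>
    rw [← (Fin.consEquiv (fun _ : Fin (r+1) => Fin n)).sum_comp, Fintype.sum_prod_type, Finset.sum_comm]
    have key : ∀ g : Fin r → Fin n, ∑ u : Fin n, p ^ (Finset.univ.image (Fin.consEquiv (fun _ : Fin (r+1) => Fin n) (u, g))).card
        ≤ p ^ (Finset.univ.image g).card * (n * p + r) := by
      intro g
      have him : ∀ u, Finset.univ.image (Fin.consEquiv (fun _ : Fin (r+1) => Fin n) (u, g)) = insert u (Finset.univ.image g) := by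
        intro u; ext y
        simp [Fin.consEquiv, Fin.exists_fin_succ, eq_comm]
      simp only [him]
      have hle : ∀ u, p ^ (insert u (Finset.univ.image g)).card ≤ p ^ (Finset.univ.image g).card * (p + if u ∈ Finset.univ.image g then 1 else 0) := by
        intro u
        split_ifs with hu
        · rw [Finset.insert_eq_of_mem hu]
          nlinarith [pow_nonneg hp0 (Finset.univ.image g).card]
        · rw [Finset.card_insert_of_notMem hu, pow_succ]; simp
      refine (Finset.sum_le_sum fun u _ => hle u).trans ?_
      rw [← Finset.mul_sum]
      refine mul_le_mul_of_nonneg_left ?_ (pow_nonneg hp0 _)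
      rw [Finset.sum_add_distrib]
      simp only [Finset.sum_const, Finset.card_univ, Fintype.card_fin, nsmul_eq_mul]
      have : (∑ u : Fin n, if u ∈ Finset.univ.image g then (1:ℝ) else 0) = (Finset.univ.image g).card := by
        simp
      rw [this]
      have h2 : (Finset.univ.image g).card ≤ r := Finset.card_image_le.trans (by simp)
      have : ((Finset.univ.image g).card : ℝ) ≤ r := by exact_mod_cast h2
      linarith
    refine (Finset.sum_le_sum fun g _ => key g).trans ?_
    rw [← Finset.sum_mul, pow_succ]
    have hb : 0 ≤ (n:ℝ) * p + r := by positivity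
    push_cast
    gcongr
    · refine ih.trans ?_
      gcongr; linarith
    · linarith

lemma comb_gen {ι : Type*} [Fintype ι] [DecidableEq ι] (n : ℕ) (p : ℝ) (hp0 : 0 ≤ p) :
    ∑ g : ι → Fin n, p ^ (Finset.univ.image g).card ≤ (n * p + Fintype.card ι) ^ (Fintype.card ι) := by
  classical
  refine le_trans (le_of_eq ?_) (comb_fin n (Fintype.card ι) p hp0)
  refine Fintype.sum_equiv (Equiv.arrowCongr (Fintype.equivFin ι) (Equiv.refl _)) _ _ fun g => ?_
  congr 2
  ext y
  simp only [Finset.mem_image, Finset.mem_univ, true_and, Equiv.arrowCongr_apply, Equiv.coe_refl, Function.comp, id]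
  constructor
  · rintro ⟨a, rfl⟩; exact ⟨Fintype.equivFin ι a, by simp⟩
  · rintro ⟨a, rfl⟩; exact ⟨_, rfl⟩

lemma overlap_sum (n m : ℕ) (p : ℝ) (hp0 : 0 ≤ p) :
    ∑ z ∈ (Finset.univ : Finset ((Fin (m+1) → Fin n) × (Fin (m+1) → Fin n))).filter (fun z => ∃ i j, z.1 i = z.2 j),
      p ^ (Finset.univ.image (Sum.elim z.1 z.2)).card ≤ ((m:ℝ)+1)^2 * (n * p + (2*m+1)) ^ (2*m+1) := by
  classical
  have one : ∀ i j : Fin (m+1), ∑ z ∈ (Finset.univ : Finset ((Fin (m+1) → Fin n) × (Fin (m+1) → Fin n))).filter (fun z => z.1 i = z.2 j),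
      p ^ (Finset.univ.image (Sum.elim z.1 z.2)).card ≤ (n * p + (2*m+1)) ^ (2*m+1) := by
    intro i j
    set φ : ((Fin (m+1) → Fin n) × (Fin (m+1) → Fin n)) → (Fin (m+1) ⊕ Fin m → Fin n) :=
      fun z => Sum.elim z.1 (fun l => z.2 (j.succAbove l)) with hφ
    have hinj : Set.InjOn φ ((Finset.univ : Finset ((Fin (m+1) → Fin n) × (Fin (m+1) → Fin n))).filter (fun z => z.1 i = z.2 j)) := by
      intro z hz z' hz' h
      have hz : z.1 i = z.2 j := by simpa using hz
      have hz' : z'.1 i = z'.2 j := by simpa using hz'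
      have h1 : z.1 = z'.1 := by
        ext l; have := congrFun h (Sum.inl l); simp only [hφ, Sum.elim_inl] at this; rw [this]
      refine Prod.ext h1 (funext fun l => ?_)
      rcases Fin.eq_self_or_eq_succAbove j l with rfl | ⟨l', rfl⟩
      · rw [← hz, ← hz', h1]
      · have := congrFun h (Sum.inr l'); simpa only [hφ, Sum.elim_inr] using this
    have him : ∀ z ∈ (Finset.univ : Finset ((Fin (m+1) → Fin n) × (Fin (m+1) → Fin n))).filter (fun z => z.1 i = z.2 j),
        p ^ (Finset.univ.image (Sum.elim z.1 z.2)).card = p ^ (Finset.univ.image (φ z)).card := by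
      intro z hz
      have hz : z.1 i = z.2 j := by simpa using hz
      congr 2
      ext y
      simp only [Finset.mem_image, Finset.mem_univ, true_and, Sum.exists, Sum.elim_inl, Sum.elim_inr, hφ]
      constructor
      · rintro (h | ⟨l, rfl⟩)
        · exact Or.inl h
        · rcases Fin.eq_self_or_eq_succAbove j l with rfl | ⟨l', rfl⟩
          · exact Or.inl ⟨i, hz⟩
          · exact Or.inr ⟨l', rfl⟩
      · rintro (h | ⟨l, rfl⟩)
        · exact Or.inl h
        · exact Or.inr ⟨_, rfl⟩
    rw [Finset.sum_congr rfl him, ← Finset.sum_image (f := fun g => p ^ (Finset.univ.image g).card) hinj]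
    refine (Finset.sum_le_univ_sum_of_nonneg fun g => pow_nonneg hp0 _).trans ?_
    refine (comb_gen n p hp0).trans (le_of_eq ?_)
    have : Fintype.card (Fin (m+1) ⊕ Fin m) = 2*m+1 := by simp; ring
    rw [this]; push_cast; rfl
  calc _ ≤ ∑ ij : Fin (m+1) × Fin (m+1), ∑ z ∈ (Finset.univ : Finset ((Fin (m+1) → Fin n) × (Fin (m+1) → Fin n))).filter (fun z => z.1 ij.1 = z.2 ij.2),
        p ^ (Finset.univ.image (Sum.elim z.1 z.2)).card := by
        simp only [Finset.sum_filter]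
        rw [Finset.sum_comm]
        refine Finset.sum_le_sum fun z _ => ?_
        have hnn : ∀ ij : Fin (m+1) × Fin (m+1), 0 ≤ if z.1 ij.1 = z.2 ij.2 then p ^ (Finset.univ.image (Sum.elim z.1 z.2)).card else 0 := by
          intro ij; split_ifs
          · exact pow_nonneg hp0 _
          · exact le_rfl
        split_ifs with hz
        · obtain ⟨i, j, hij⟩ := hz
          refine le_trans ?_ (Finset.single_le_sum (fun ij _ => hnn ij) (Finset.mem_univ (i, j)))
          rw [if_pos hij]
        · exact Finset.sum_nonneg fun ij _ => hnn ij
    _ ≤ ∑ ij : Fin (m+1) × Fin (m+1), (n * p + (2*m+1)) ^ (2*m+1) := Finset.sum_le_sum fun ij _ => one ij.1 ij.2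
    _ = _ := by
        rw [Finset.sum_const, nsmul_eq_mul]
        simp only [Finset.card_univ, Fintype.card_prod, Fintype.card_fin]
        push_cast; ring

open scoped Classical in
def inj (k n : ℕ) : Finset (Fin k → Fin n) := Finset.univ.filter Function.Injective

lemma mem_inj {k n : ℕ} (v : Fin k → Fin n) : v ∈ inj k n ↔ Function.Injective v := by simp [inj]

lemma card_inj (k n : ℕ) : (inj k n).card = n.descFactorial k := by
  classical
  have : Fintype.card (Fin k ↪ Fin n) = n.descFactorial k := by simp [Fintype.card_embedding_eq]
  rw [← this, inj, ← Fintype.card_subtype]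
  exact Fintype.card_congr (Equiv.subtypeInjectiveEquivEmbedding _ _)

lemma second_moment {m d n : ℕ} (μ : Measure ℝ) [IsProbabilityMeasure μ] (h : ℝ) (B : Set (GirgΩ d (m+1)))
    (hB : MeasurableSet B) (hBh : B ⊆ {ω | ∀ i, h < ω.1 i}) :
    ∑ v ∈ inj (m+1) n, ∑ v' ∈ inj (m+1) n, (girgMeasure μ d n).real (Rv v ⁻¹' B ∩ Rv v' ⁻¹' B) ≤
      (∑ v ∈ inj (m+1) n, (girgMeasure μ d n).real (Rv v ⁻¹' B))^2 +
        ((m:ℝ)+1)^2 * (n * μ.real (Set.Ioi h) + (2*m+1)) ^ (2*m+1) := by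
  classical
  set p := μ.real (Set.Ioi h) with hp
  have hp0 : 0 ≤ p := measureReal_nonneg
  have hterm : ∀ v ∈ inj (m+1) n, ∀ v' ∈ inj (m+1) n, (girgMeasure μ d n).real (Rv v ⁻¹' B ∩ Rv v' ⁻¹' B) ≤
      (girgMeasure μ d n).real (Rv v ⁻¹' B) * (girgMeasure μ d n).real (Rv v' ⁻¹' B) +
      if ∃ i j, v i = v' j then p ^ (Finset.univ.image (Sum.elim v v')).card else 0 := by
    intro v hv v' hv'
    rw [mem_inj] at hv hv'
    split_ifs with hov
    · refine le_trans ?_ (le_add_of_nonneg_left (mul_nonneg measureReal_nonneg measureReal_nonneg))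
      rw [hp, ← card_prob μ h (Sum.elim v v')]
      have : (girgMeasure μ d n).real (Prod.fst ⁻¹' {w : Fin n → ℝ | ∀ i, h < w (Sum.elim v v' i)}) =
          (Measure.pi fun _ : Fin n => μ).real {w | ∀ i, h < w (Sum.elim v v' i)} := by
        rw [measureReal_def, measureReal_def]
        congr 1
        refine (measurePreserving_fst (μ := Measure.pi fun _ : Fin n => μ)).measure_preimage ?_
        refine MeasurableSet.nullMeasurableSet ?_
        have : {w : Fin n → ℝ | ∀ i, h < w (Sum.elim v v' i)} = ⋂ i, {w | h < w (Sum.elim v v' i)} := by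
          ext w; simp
        rw [this]
        exact MeasurableSet.iInter fun i => measurableSet_lt measurable_const (measurable_pi_apply _)
      rw [← this]
      refine measureReal_mono ?_
      rintro ω ⟨h1, h2⟩ (i | i)
      · exact hBh h1 i
      · exact hBh h2 i
    · push Not at hov
      rw [add_zero]
      refine le_of_eq ?_
      have h1 := (Rv_pair (d := d) μ v v' hv hv' hov).measure_preimage (hB.prod hB).nullMeasurableSet
      have h2 := (Rv_mp (d := d) μ v hv).measure_preimage hB.nullMeasurableSet
      have h3 := (Rv_mp (d := d) μ v' hv').measure_preimage hB.nullMeasurableSet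
      rw [measureReal_def, measureReal_def, measureReal_def, h2, h3, ← ENNReal.toReal_mul, ← Measure.prod_prod, ← h1]
      rfl
  refine (Finset.sum_le_sum fun v hv => Finset.sum_le_sum fun v' hv' => hterm v hv v' hv').trans ?_
  simp only [Finset.sum_add_distrib]
  rw [sq, Finset.sum_mul_sum]
  refine add_le_add le_rfl ?_
  refine le_trans ?_ (overlap_sum n m p hp0)
  rw [Finset.sum_filter, ← Finset.univ_product_univ, Finset.sum_product]
  have hnn : ∀ v v' : Fin (m+1) → Fin n, 0 ≤ if ∃ i j, v i = v' j then p ^ (Finset.univ.image (Sum.elim v v')).card else 0 := by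
    intro v v'; split_ifs
    · exact pow_nonneg hp0 _
    · exact le_rfl
  refine (Finset.sum_le_sum fun v _ => Finset.sum_le_univ_sum_of_nonneg fun v' => hnn v v').trans ?_
  exact Finset.sum_le_univ_sum_of_nonneg fun v => Finset.sum_nonneg fun v' _ => hnn v v'



lemma edge_iff {k d n : ℕ} (γ M : ℝ) (ω : GirgΩ d n) (v : Fin k → Fin n) (hv : Function.Injective v) (i j : Fin k) :
    girgEdge γ M d n ω (v i) (v j) ↔ i ≠ j ∧ (Rv v ω).2.2 s(i,j) ≤ prS γ (n * M) (Rv v ω).1 (Rv v ω).2.1 s(i,j) := by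
  unfold girgEdge
  rw [hv.ne_iff]
  rfl

lemma pat_sub_iff {k d n : ℕ} (H : SimpleGraph (Fin k)) (γ M : ℝ) (ω : GirgΩ d n) (v : Fin k → Fin n) (hv : Function.Injective v) :
    (∀ i j : Fin k, H.Adj i j → girgEdge γ M d n ω (v i) (v j)) ↔ Rv v ω ∈ Pat .sub d H γ (n * M) := by
  simp only [edge_iff γ M ω v hv]
  unfold Pat coinSet
  constructor
  · intro h e
    induction e using Sym2.ind with
    | _ i j =>
    dsimp only
    split_ifs with he
    · exact (h i j (by simpa using he)).2
    · trivial
  · intro h i j hij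
    have := h s(i,j)
    rw [if_pos (by simpa using hij)] at this
    exact ⟨hij.ne, this⟩

lemma pat_ind_iff {k d n : ℕ} (H : SimpleGraph (Fin k)) (γ M : ℝ) (ω : GirgΩ d n) (v : Fin k → Fin n) (hv : Function.Injective v) :
    (∀ i j : Fin k, i ≠ j → (H.Adj i j ↔ girgEdge γ M d n ω (v i) (v j))) ↔ Rv v ω ∈ Pat .ind d H γ (n * M) := by
  simp only [edge_iff γ M ω v hv]
  unfold Pat coinSet
  constructor
  · intro h e
    induction e using Sym2.ind with
    | _ i j =>
    dsimp only
    split_ifs with he hdg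
    · have he : H.Adj i j := by simpa using he
      exact ((h i j he.ne).1 he).2
    · trivial
    · have hij : i ≠ j := by simpa using hdg
      have he : ¬ H.Adj i j := by simpa using he
      have := mt (h i j hij).2 he
      rw [not_and] at this
      exact not_le.1 (this hij)
  · intro h i j hij
    have := h s(i,j)
    dsimp only at this
    constructor
    · intro hadj
      rw [if_pos (by simpa using hadj)] at this
      exact ⟨hij, this⟩
    · rintro ⟨_, h2⟩
      by_contra hadj
      rw [if_neg (by simpa using hadj), if_neg (by simpa using hij)] at this
      exact absurd h2 (not_le.2 this)

lemma count_eq (s : StarKind) {k d n : ℕ} (H : SimpleGraph (Fin k)) (γ M : ℝ) (ω : GirgΩ d n) :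
    (starNTotal s H γ M d n ω : ℝ) = ∑ v ∈ inj k n, (Rv v ⁻¹' Pat s d H γ (n * M)).indicator (1 : GirgΩ d n → ℝ) ω := by
  classical
  have e : starNTotal s H γ M d n ω = Set.ncard (((inj k n).filter (fun v => Rv v ω ∈ Pat s d H γ (n * M)) : Finset (Fin k → Fin n)) : Set (Fin k → Fin n)) := by
    cases s
    · unfold starNTotal nIndTotal
      dsimp only
      congr 1; ext v
      simp only [Finset.coe_filter, mem_inj]
      exact and_congr_right fun hv => pat_ind_iff H γ M ω v hv
    · unfold starNTotal nSubTotal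
      dsimp only
      congr 1; ext v
      simp only [Finset.coe_filter, mem_inj]
      exact and_congr_right fun hv => pat_sub_iff H γ M ω v hv
  rw [e, Set.ncard_coe_finset, Finset.card_filter]
  push_cast
  refine Finset.sum_congr rfl fun v _ => ?_
  simp only [Set.indicator, Set.mem_preimage, Pi.one_apply]

lemma cheb {Ω V : Type*} [MeasurableSpace Ω] (P : Measure Ω) [IsProbabilityMeasure P] (T : Finset V)
    (E F : V → Set Ω) (hE : ∀ v ∈ T, MeasurableSet (E v)) (hF : ∀ v ∈ T, MeasurableSet (F v)) (hFE : ∀ v, F v ⊆ E v)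
    (A I δ : ℝ) (hA : 0 < A) (hδ : 0 < δ) :
    P.real {ω | δ < |(∑ v ∈ T, (E v).indicator (1 : Ω → ℝ) ω) / A - I|} ≤
      4/δ^2 * ((∑ v ∈ T, ∑ v' ∈ T, P.real (F v ∩ F v')) / A^2 - 2 * I * ((∑ v ∈ T, P.real (F v)) / A) + I^2)
      + 2/δ * ((∑ v ∈ T, P.real (E v)) / A - (∑ v ∈ T, P.real (F v)) / A) := by
  set N : Ω → ℝ := fun ω => ∑ v ∈ T, (E v).indicator (1 : Ω → ℝ) ω with hN
  set Y : Ω → ℝ := fun ω => ∑ v ∈ T, (F v).indicator (1 : Ω → ℝ) ω with hY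
  have hii : ∀ S : Set Ω, MeasurableSet S → Integrable (S.indicator (1 : Ω → ℝ)) P := fun S hS =>
    (integrable_const (1:ℝ)).indicator hS
  have hiv : ∀ S : Set Ω, MeasurableSet S → ∫ ω, S.indicator (1 : Ω → ℝ) ω ∂P = P.real S := fun S hS =>
    integral_indicator_one hS
  have hNi : Integrable N P := integrable_finsetSum _ fun v hv => hii _ (hE v hv)
  have hYi : Integrable Y P := integrable_finsetSum _ fun v hv => hii _ (hF v hv)
  have hNv : ∫ ω, N ω ∂P = ∑ v ∈ T, P.real (E v) := by
    rw [hN, integral_finsetSum _ fun v hv => hii _ (hE v hv)]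
    exact Finset.sum_congr rfl fun v hv => hiv _ (hE v hv)
  have hYv : ∫ ω, Y ω ∂P = ∑ v ∈ T, P.real (F v) := by
    rw [hY, integral_finsetSum _ fun v hv => hii _ (hF v hv)]
    exact Finset.sum_congr rfl fun v hv => hiv _ (hF v hv)
  have hY2 : (fun ω => Y ω ^ 2) = fun ω => ∑ v ∈ T, ∑ v' ∈ T, (F v ∩ F v').indicator (1 : Ω → ℝ) ω := by
    ext ω
    rw [hY, sq, Finset.sum_mul_sum]
    refine Finset.sum_congr rfl fun v _ => Finset.sum_congr rfl fun v' _ => ?_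
    rw [Set.inter_indicator_one]; rfl
  have hi2 : ∀ v ∈ T, Integrable (fun ω => ∑ v' ∈ T, (F v ∩ F v').indicator (1 : Ω → ℝ) ω) P := fun v hv =>
    integrable_finsetSum _ fun v' hv' => hii _ ((hF v hv).inter (hF v' hv'))
  have hY2i : Integrable (fun ω => Y ω ^ 2) P := by
    rw [hY2]
    exact integrable_finsetSum _ hi2
  have hY2v : ∫ ω, Y ω ^ 2 ∂P = ∑ v ∈ T, ∑ v' ∈ T, P.real (F v ∩ F v') := by
    rw [hY2, integral_finsetSum _ hi2]
    refine Finset.sum_congr rfl fun v hv => ?_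
    rw [integral_finsetSum _ fun v' hv' => hii _ ((hF v hv).inter (hF v' hv'))]
    exact Finset.sum_congr rfl fun v' hv' => hiv _ ((hF v hv).inter (hF v' hv'))
  have hYN : ∀ ω, Y ω ≤ N ω := fun ω => Finset.sum_le_sum fun v _ =>
    Set.indicator_le_indicator_of_subset (hFE v) (fun _ => zero_le_one) ω
  -- first bound
  have hexp : (fun ω => (Y ω / A - I)^2) = fun ω => Y ω ^ 2 / A^2 - 2 * I * (Y ω / A) + I^2 := by
    ext ω; rw [sub_sq, div_pow]; ring
  have hj1 : Integrable (fun ω => Y ω ^ 2 / A^2 - 2 * I * (Y ω / A)) P :=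
    (hY2i.div_const _).sub ((hYi.div_const _).const_mul _)
  have hsqi : Integrable (fun ω => (Y ω / A - I)^2) P := by
    rw [hexp]; exact hj1.add (integrable_const _)
  have hsqv : ∫ ω, (Y ω / A - I)^2 ∂P = (∑ v ∈ T, ∑ v' ∈ T, P.real (F v ∩ F v')) / A^2 - 2 * I * ((∑ v ∈ T, P.real (F v)) / A) + I^2 := by
    rw [hexp, integral_add hj1 (integrable_const _), integral_sub (hY2i.div_const _) ((hYi.div_const _).const_mul _),
      integral_div, integral_const_mul, integral_div, hY2v, hYv]
    simp
  have b1 := mul_meas_ge_le_integral_of_nonneg (ae_of_all P fun ω => sq_nonneg (Y ω / A - I)) hsqi ((δ/2)^2)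
  have hzi : Integrable (fun ω => N ω / A - Y ω / A) P := (hNi.div_const _).sub (hYi.div_const _)
  have hzv : ∫ ω, (N ω / A - Y ω / A) ∂P = (∑ v ∈ T, P.real (E v)) / A - (∑ v ∈ T, P.real (F v)) / A := by
    rw [integral_sub (hNi.div_const _) (hYi.div_const _), integral_div, integral_div, hNv, hYv]
  have hz0 : ∀ ω, 0 ≤ N ω / A - Y ω / A := fun ω => sub_nonneg.2 (div_le_div_of_nonneg_right (hYN ω) hA.le)
  have b2 := mul_meas_ge_le_integral_of_nonneg (ae_of_all P hz0) hzi (δ/2)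
  rw [hsqv] at b1
  rw [hzv] at b2
  have hsub : {ω | δ < |N ω / A - I|} ⊆ {ω | (δ/2)^2 ≤ (Y ω / A - I)^2} ∪ {ω | δ/2 ≤ N ω / A - Y ω / A} := by
    intro ω hω
    by_contra hcon
    simp only [Set.mem_union, not_or] at hcon
    have c1 : ¬ (δ/2)^2 ≤ (Y ω / A - I)^2 := hcon.1
    have c2 : ¬ δ/2 ≤ N ω / A - Y ω / A := hcon.2
    have hω : δ < |N ω / A - I| := hω
    push Not at c1 c2
    have c3 : |Y ω / A - I| < δ/2 := abs_lt_of_sq_lt_sq c1 (by linarith)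
    have := hz0 ω
    rw [abs_lt] at c3
    rcases lt_abs.1 hω with h | h <;> linarith [c3.1, c3.2]
  refine (measureReal_mono hsub).trans ((measureReal_union_le _ _).trans ?_)
  refine add_le_add ?_ ?_
  · rw [div_mul_eq_mul_div, le_div_iff₀ (by positivity)]; nlinarith
  · rw [div_mul_eq_mul_div, le_div_iff₀ (by positivity)]; nlinarith



lemma descF_lim (k : ℕ) : Tendsto (fun n : ℕ => (n.descFactorial k : ℝ) / (n:ℝ)^k) atTop (nhds 1) := by
  have h : ∀ i : ℕ, Tendsto (fun n : ℕ => ((n - i : ℕ) : ℝ) / n) atTop (nhds 1) := by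
    intro i
    have h1 : Tendsto (fun n : ℕ => 1 - (i:ℝ) / n) atTop (nhds (1 - 0)) :=
      tendsto_const_nhds.sub (tendsto_const_div_atTop_nhds_zero_nat _)
    rw [sub_zero] at h1
    refine h1.congr' ?_
    filter_upwards [eventually_ge_atTop i, eventually_gt_atTop 0] with n hn h0
    have : (n:ℝ) ≠ 0 := by positivity
    rw [Nat.cast_sub hn]; field_simp
  have h2 := tendsto_finsetProd (Finset.range k) (fun i _ => h i)
  simp only [Finset.prod_const_one] at h2
  refine h2.congr fun n => ?_
  rw [Nat.descFactorial_eq_prod_range, Finset.prod_div_distrib]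
  simp

lemma exp_Ln_pow {τ : ℝ} (k n : ℕ) (hn : 0 < n) :
    (n:ℝ) ^ ((k:ℝ) * (3-τ)/2) * (Real.exp (Ln τ n))^k = (n:ℝ)^k := by
  have hn' : (0:ℝ) < n := by exact_mod_cast hn
  have : Real.exp (Ln τ n) = (n:ℝ) ^ ((τ-1)/2) := by
    rw [Ln, Real.rpow_def_of_pos hn']; ring_nf
  rw [this, ← Real.rpow_natCast, ← Real.rpow_mul hn'.le, ← Real.rpow_add hn', ← Real.rpow_natCast]
  congr 1; ring

lemma err_lim {τ c : ℝ} (hτ : 2 < τ) (hτ3 : τ < 3) {μ : Measure ℝ} [IsProbabilityMeasure μ] (hW : WeightTail τ c μ) (m : ℕ) :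
    ∃ κ : ℝ, 0 < κ ∧ Tendsto (fun n : ℕ => (((m:ℝ)+1)^2 * (n * μ.real (Set.Ioi ((n:ℝ)^(1/2-κ))) + (2*m+1)) ^ (2*m+1)) /
      ((n:ℝ) ^ (((m+1 : ℕ):ℝ) * (3-τ)/2))^2) atTop (nhds 0) := by
  obtain ⟨C, hC, ht⟩ := tail_le hτ hW
  set ρ := (3-τ)/2 with hρ
  have hρ0 : 0 < ρ := by rw [hρ]; linarith
  set ε := ρ / (2 * (2*m+1)) with hε
  have hε0 : 0 < ε := by positivity
  have hτ1 : 0 < τ - 1 := by linarith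
  refine ⟨ε/(τ-1), by positivity, ?_⟩
  have hlim : Tendsto (fun n : ℕ => (((m:ℝ)+1)^2 * (C + (2*m+1))^(2*m+1)) * (n:ℝ)^(-(ρ/2))) atTop (nhds 0) := by
    have := ((tendsto_rpow_neg_atTop (half_pos hρ0)).comp tendsto_natCast_atTop_atTop).const_mul (((m:ℝ)+1)^2 * (C + (2*m+1))^(2*m+1))
    rw [mul_zero] at this
    exact this
  refine squeeze_zero' (Eventually.of_forall fun n => ?_) ?_ hlim
  · have : 0 ≤ μ.real (Set.Ioi ((n:ℝ)^(1/2-ε/(τ-1)))) := measureReal_nonneg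
    positivity
  · filter_upwards [eventually_ge_atTop 1] with n hn
    have hn1 : (1:ℝ) ≤ n := by exact_mod_cast hn
    have hn0 : (0:ℝ) < n := by linarith
    have hb : n * μ.real (Set.Ioi ((n:ℝ)^(1/2-ε/(τ-1)))) + (2*m+1) ≤ (C + (2*m+1)) * (n:ℝ)^(ρ+ε) := by
      have h1 := ht ((n:ℝ)^(1/2-ε/(τ-1))) (by positivity)
      have h2 : (n:ℝ) * (C * ((n:ℝ)^(1/2-ε/(τ-1)))^(1-τ)) = C * (n:ℝ)^(ρ+ε) := by
        rw [← Real.rpow_mul hn0.le, mul_left_comm]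
        congr 1
        nth_rewrite 1 [← Real.rpow_one (n:ℝ)]
        rw [← Real.rpow_add hn0]
        congr 1
        rw [hρ]
        field_simp
        ring
      have h3 : (1:ℝ) ≤ (n:ℝ)^(ρ+ε) := Real.one_le_rpow hn1 (by positivity)
      have h4 := mul_le_mul_of_nonneg_left h1 hn0.le
      rw [h2] at h4
      rw [add_mul]
      have h5 : (2*(m:ℝ)+1) * 1 ≤ (2*m+1) * (n:ℝ)^(ρ+ε) := mul_le_mul_of_nonneg_left h3 (by positivity)
      linarith
    have hnn : 0 ≤ n * μ.real (Set.Ioi ((n:ℝ)^(1/2-ε/(τ-1)))) + (2*m+1) := by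
      have : 0 ≤ μ.real (Set.Ioi ((n:ℝ)^(1/2-ε/(τ-1)))) := measureReal_nonneg
      positivity
    rw [div_le_iff₀ (by positivity)]
    calc _ ≤ ((m:ℝ)+1)^2 * ((C + (2*m+1)) * (n:ℝ)^(ρ+ε))^(2*m+1) := by gcongr
      _ = _ := by
        rw [mul_pow, ← mul_assoc, mul_assoc _ ((n:ℝ)^(-(ρ/2)))]
        congr 1
        rw [← Real.rpow_natCast, ← Real.rpow_natCast, ← Real.rpow_mul hn0.le, ← Real.rpow_mul hn0.le, ← Real.rpow_add hn0]
        congr 1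
        have : ρ = 2 * (2*m+1) * ε := by rw [hε]; field_simp
        have h3τ : 3 - τ = 2 * ρ := by rw [hρ]; ring
        push_cast
        rw [h3τ, this]
        ring

lemma main_conv {m d : ℕ} (hd : 1 ≤ d) (hm : 3 ≤ m+1) (s : StarKind) (H : SimpleGraph (Fin (m+1))) (σ : Equiv.Perm (Fin (m+1)))
    (hH : ∀ i, H.Adj (σ i) (σ (i+1))) (hodd : Odd (m+1)) (τ γ c : ℝ) (hτ : 2 < τ) (hτ3 : τ < 3) (hγ : 1 < γ)
    (hk : 1/2 < 1/(τ-1) * ((m:ℝ)/(m+1)))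
    (μ : Measure ℝ) [IsProbabilityMeasure μ] (hW : WeightTail τ c μ) :
    ∃ I : ℝ, 0 < I ∧ ∀ δ : ℝ, 0 < δ →
      Tendsto (fun n : ℕ => girgMeasure μ d n
          {ω | δ < |(starNTotal s H γ (wMean μ) d n ω : ℝ) /
                     (n : ℝ) ^ (((m+1 : ℕ) : ℝ) * (3 - τ) / 2) - I|})
        atTop (nhds 0) := by
  obtain ⟨hfin, hlim⟩ := pat_lim hd hm s H σ hH hodd τ γ c hτ hγ hk hW
  have hpos := Iinf_pos s hd H τ γ c (wMean μ) hτ hW.1 (wMean_pos hτ hW) hγ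
  obtain ⟨κ, hκ, herr⟩ := err_lim hτ hτ3 hW m
  set I := (Iinf s d H τ γ c (wMean μ)).toReal with hI
  refine ⟨I, ENNReal.toReal_pos hpos.ne' hfin.ne, fun δ hδ => ?_⟩
  set A : ℕ → ℝ := fun n => (n : ℝ) ^ (((m+1 : ℕ) : ℝ) * (3 - τ) / 2) with hA
  set S : ℕ → Set (Fin (m+1) → ℝ) := fun n => {w | ∀ i, (n:ℝ)^(1/2-κ) < w i} with hS
  have hSm : ∀ n, MeasurableSet (S n) := by
    intro n
    have : S n = ⋂ i, {w | (n:ℝ)^(1/2-κ) < w i} := by ext w; simp [hS]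
    rw [this]
    exact MeasurableSet.iInter fun i => measurableSet_lt measurable_const (measurable_pi_apply i)
  have hSe : ∀ v : Fin (m+1) → ℝ, ∀ᶠ n in atTop, (fun i => qf μ (v i - Ln τ n)) ∈ S n := by
    intro v
    have : ∀ᶠ n : ℕ in atTop, ∀ i, (n:ℝ)^(1/2-κ) < qf μ (v i - Ln τ n) := by
      rw [eventually_all]; intro i
      have h1 := qn_tendsto hτ hW (v i)
      have h2 := (tendsto_rpow_neg_atTop hκ).comp (tendsto_natCast_atTop_atTop (R := ℝ))
      have hp : 0 < c ^ (1/(τ-1)) * Real.exp (-(1/(τ-1)) * v i) := mul_pos (Real.rpow_pos_of_pos hW.1 _) (Real.exp_pos _)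
      filter_upwards [h2.eventually_lt h1 hp, eventually_gt_atTop 0] with n hn h0
      have hn0 : (0:ℝ) < n := by exact_mod_cast h0
      simp only [Function.comp] at hn
      rw [lt_div_iff₀ (Real.sqrt_pos.2 hn0), Real.sqrt_eq_rpow, ← Real.rpow_add hn0] at hn
      rw [sub_eq_neg_add]; exact hn
    exact this
  set P : ∀ n, Measure (GirgΩ d n) := fun n => girgMeasure μ d n with hP
  set B : ℕ → Set (GirgΩ d (m+1)) := fun n => Pat s d H γ (n * wMean μ) ∩ {ω | ω.1 ∈ S n} with hB
  have hPm : ∀ n : ℕ, MeasurableSet (Pat s d H γ (n * wMean μ)) := fun n => Pat_meas s H γ _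
  have hBm : ∀ n, MeasurableSet (B n) := fun n => (hPm n).inter (measurable_fst (hSm n))
  have hsum : ∀ (n : ℕ) (D : Set (GirgΩ d (m+1))), MeasurableSet D → 0 < n →
      (∑ v ∈ inj (m+1) n, (girgMeasure μ d n).real (Rv v ⁻¹' D)) / A n =
      ((n.descFactorial (m+1) : ℝ) / (n:ℝ)^(m+1)) *
        ((ENNReal.ofReal (Real.exp (Ln τ n)))^(m+1) * girgMeasure μ d (m+1) D).toReal := by
    intro n D hD hn
    have hn0 : (0:ℝ) < n := by exact_mod_cast hn
    have h1 : ∀ v ∈ inj (m+1) n, (girgMeasure μ d n).real (Rv v ⁻¹' D) = (girgMeasure μ d (m+1)).real D := by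
      intro v hv
      rw [measureReal_def, measureReal_def, (Rv_mp (d := d) μ v ((mem_inj v).1 hv)).measure_preimage hD.nullMeasurableSet]
    rw [Finset.sum_congr rfl h1, Finset.sum_const, card_inj, nsmul_eq_mul, ENNReal.toReal_mul, ENNReal.toReal_pow,
      ENNReal.toReal_ofReal (Real.exp_pos _).le, ← exp_Ln_pow (τ := τ) (m+1) n hn, measureReal_def]
    have hA0 : A n ≠ 0 := by simp only [hA]; positivity
    have he : (Real.exp (Ln τ n))^(m+1) ≠ 0 := by positivity
    have hAn : A n = (n : ℝ) ^ (((m+1 : ℕ) : ℝ) * (3 - τ) / 2) := rfl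
    rw [← hAn]
    field_simp
  have limN : Tendsto (fun n : ℕ => (∑ v ∈ inj (m+1) n, (girgMeasure μ d n).real (Rv v ⁻¹' (Pat s d H γ (n * wMean μ)))) / A n)
      atTop (nhds I) := by
    have h1 := hlim (fun _ => Set.univ) (fun _ => MeasurableSet.univ) (fun _ => Eventually.of_forall fun _ => trivial)
    have h2 := (descF_lim (m+1)).mul ((ENNReal.tendsto_toReal hfin.ne).comp h1)
    rw [one_mul] at h2
    refine h2.congr' ?_
    filter_upwards [eventually_gt_atTop 0] with n hn
    rw [hsum n _ (hPm n) hn]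
    simp
  have limY : Tendsto (fun n : ℕ => (∑ v ∈ inj (m+1) n, (girgMeasure μ d n).real (Rv v ⁻¹' (B n))) / A n)
      atTop (nhds I) := by
    have h1 := hlim S hSm hSe
    have h2 := (descF_lim (m+1)).mul ((ENNReal.tendsto_toReal hfin.ne).comp h1)
    rw [one_mul] at h2
    refine h2.congr' ?_
    filter_upwards [eventually_gt_atTop 0] with n hn
    rw [hsum n _ (hBm n) hn]
    rfl
  set SY : ℕ → ℝ := fun n => ∑ v ∈ inj (m+1) n, (girgMeasure μ d n).real (Rv v ⁻¹' (B n)) with hSY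
  set SN : ℕ → ℝ := fun n => ∑ v ∈ inj (m+1) n, (girgMeasure μ d n).real (Rv v ⁻¹' (Pat s d H γ (n * wMean μ))) with hSN
  set err : ℕ → ℝ := fun n => ((m:ℝ)+1)^2 * (n * μ.real (Set.Ioi ((n:ℝ)^(1/2-κ))) + (2*m+1)) ^ (2*m+1) with herrd
  have hbound : Tendsto (fun n : ℕ => 4/δ^2 * ((SY n / A n)^2 + err n / (A n)^2 - 2 * I * (SY n / A n) + I^2)
      + 2/δ * (SN n / A n - SY n / A n)) atTop (nhds 0) := by
    have := (((((limY.pow 2).add herr).sub (limY.const_mul (2*I))).add_const (I^2)).const_mul (4/δ^2)).add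
      ((limN.sub limY).const_mul (2/δ))
    have e0 : 4/δ^2 * (I^2 + 0 - 2 * I * I + I^2) + 2/δ * (I - I) = 0 := by ring
    rw [e0] at this
    exact this
  have hreal : Tendsto (fun n : ℕ => (girgMeasure μ d n).real
          {ω | δ < |(starNTotal s H γ (wMean μ) d n ω : ℝ) / A n - I|}) atTop (nhds 0) := by
    refine squeeze_zero' (Eventually.of_forall fun n => measureReal_nonneg) ?_ hbound
    filter_upwards [eventually_gt_atTop 0] with n hn
    have hn0 : (0:ℝ) < n := by exact_mod_cast hn
    have hA0 : 0 < A n := by simp only [hA]; positivity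
    have hc := cheb (girgMeasure μ d n) (inj (m+1) n) (fun v => Rv v ⁻¹' (Pat s d H γ (n * wMean μ))) (fun v => Rv v ⁻¹' (B n))
      (fun v hv => (Rv_mp (d := d) μ v ((mem_inj v).1 hv)).measurable (hPm n))
      (fun v hv => (Rv_mp (d := d) μ v ((mem_inj v).1 hv)).measurable (hBm n))
      (fun v => Set.preimage_mono Set.inter_subset_left) (A n) I δ hA0 hδ
    have hsm := second_moment (n := n) μ ((n:ℝ)^(1/2-κ)) (B n) (hBm n) (fun ω hω => hω.2)
    simp only [count_eq]
    refine hc.trans ?_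
    refine add_le_add ?_ le_rfl
    refine mul_le_mul_of_nonneg_left ?_ (by positivity)
    have : (∑ v ∈ inj (m+1) n, ∑ v' ∈ inj (m+1) n, (girgMeasure μ d n).real (Rv v ⁻¹' B n ∩ Rv v' ⁻¹' B n)) / (A n)^2
        ≤ (SY n / A n)^2 + err n / (A n)^2 := by
      rw [div_pow, ← add_div]
      exact div_le_div_of_nonneg_right hsm (by positivity)
    linarith
  have := (ENNReal.continuous_ofReal.tendsto 0).comp hreal
  rw [ENNReal.ofReal_zero] at this
  refine this.congr fun n => ?_
  simp only [Function.comp]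
  rw [measureReal_def, ENNReal.ofReal_toReal (measure_ne_top _ _)]


/-- Theorem `hamiltonian`(ii), non-geometric regime: for a
Hamiltonian pattern `H` of odd size `k > 2/(3-τ)`, the vector `(α,β) ≡ (1/2, 0)`
solves the optimization problem and `N^⋆(H)/n^{k(3-τ)/2}` converges in probability
to a positive constant. -/
theorem girg_hamiltonian_nongeometric_phase
    {k d : ℕ} [NeZero k] (hd : 1 ≤ d) (τ γ c : ℝ) (hτ : τ ∈ Set.Ioo (2:ℝ) 3) (hγ : 1 < γ)
    (μW : Measure ℝ) [IsProbabilityMeasure μW] (hW : WeightTail τ c μW)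
    (H : SimpleGraph (Fin k)) (hH : IsHamiltonianPattern H)
    (hk : 2 / (3 - τ) < (k : ℝ)) (hodd : Odd k) (s : StarKind) :
    starIsOptimal s τ γ d H (fun _ => 1 / 2) (fun _ _ => 0) ∧
    ∃ I : ℝ, 0 < I ∧ ∀ δ : ℝ, 0 < δ →
      Tendsto (fun n : ℕ => girgMeasure μW d n
          {ω | δ < |(starNTotal s H γ (wMean μW) d n ω : ℝ) /
                     (n : ℝ) ^ ((k : ℝ) * (3 - τ) / 2) - I|})
        atTop (nhds 0) := by
  obtain ⟨σ, hσ⟩ := hH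
  have h1 := hτ.1
  have h2 := hτ.2
  have hp : 2 < (k:ℝ) * (3 - τ) := (div_lt_iff₀ (by linarith)).1 hk
  have hk3 : 3 ≤ k := by
    by_contra hcon
    have hk2 : (k:ℝ) ≤ 2 := by exact_mod_cast (by omega : k ≤ 2)
    nlinarith
  refine ⟨opt_main hd τ γ hτ hγ H σ hσ (cycle_inj hk3 σ) hk s, ?_⟩
  obtain ⟨m, rfl⟩ : ∃ m, k = m + 1 := ⟨k - 1, by omega⟩
  have hk' : 1 / 2 < 1 / (τ - 1) * ((m:ℝ) / (m + 1)) := by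
    push_cast at hp
    rw [div_mul_div_comm, one_mul, div_lt_div_iff₀ (by norm_num) (by
      have : (0:ℝ) < τ - 1 := by linarith
      positivity)]
    nlinarith
  exact main_conv hd hk3 s H σ hσ hodd τ γ c hτ.1 hτ.2 hγ hk' μW hW

end
end

section
/- Let T = (V_T, E_T) be a finite tree, and let (X_i)_{i ∈ V_T} be i.i.d. random variables, each uniformly distributed on the d-dimensional torus T^d = ℝ^d/ℤ^d. For each edge (i,j) ∈ E_T, let f_{ij} : [0,1/2] → ℝ be a bounded measurable function. Then E[ ∏_{(i,j) ∈ E_T} f_{ij}(‖X_i − X_j‖) ] = ∏_{(i,j) ∈ E_T} E[ f_{ij}(‖X_i − X_j‖) ]. -/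
open MeasureTheory Filter Finset

noncomputable section

instance torusTree_prob1 : IsProbabilityMeasure (volume : Measure (AddCircle (1:ℝ))) :=
  ⟨by rw [AddCircle.measure_univ]; simp⟩

lemma torusTree_norm_le {d : ℕ} (z : Torus d) : ‖z‖ ∈ Set.Icc (0:ℝ) (1/2) := by
  refine ⟨norm_nonneg _, (pi_norm_le_iff_of_nonneg (by norm_num)).2 fun i => ?_⟩
  have := AddCircle.norm_le_half_period (p := (1:ℝ)) (x := z i) one_ne_zero
  simpa using this

abbrev torusTreeM (k d : ℕ) : Measure (Fin k → Torus d) :=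
  Measure.pi fun _ => (volume : Measure (Torus d))

instance torusTree_inv1 (d : ℕ) : (volume : Measure (Torus d)).IsAddLeftInvariant :=
  inferInstanceAs (Measure.pi fun _ : Fin d =>
    (volume : Measure (AddCircle (1:ℝ)))).IsAddLeftInvariant

instance torusTree_inv (k d : ℕ) : (torusTreeM k d).IsAddLeftInvariant :=
  Measure.pi.isAddLeftInvariant _

open scoped Classical in
lemma torusTree_step {k d : ℕ} (u v : Fin k) (A : Set (Fin k)) (hv : v ∈ A) (hu : u ∉ A)
    (f : ℝ → ℝ) (hf : Measurable f) (C : ℝ) (hC : ∀ y ∈ Set.Icc (0:ℝ) (1/2), |f y| ≤ C)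
    (g : (Fin k → Torus d) → ℝ) (hg : Measurable g) (D : ℝ) (hD : ∀ X, |g X| ≤ D)
    (hinv : ∀ (t : Torus d) X, g ((fun i => if i ∈ A then t else 0) + X) = g X) :
    ∫ X, f (dist (X u) (X v)) * g X ∂(torusTreeM k d)
      = (∫ t : Torus d, f ‖t‖) * ∫ X, g X ∂(torusTreeM k d) := by
  have hd : ∀ X : Fin k → Torus d, dist (X u) (X v) = ‖X v - X u‖ := fun X => by
    rw [dist_comm, dist_eq_norm]
  simp_rw [hd]
  have h1 : ∀ t : Torus d, ∫ X, f ‖X v - X u‖ * g X ∂(torusTreeM k d)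
      = ∫ X, f ‖t + (X v - X u)‖ * g X ∂(torusTreeM k d) := by
    intro t
    rw [← integral_add_left_eq_self (μ := torusTreeM k d) (fun X => f ‖X v - X u‖ * g X)
      (fun i => if i ∈ A then t else 0)]
    refine integral_congr_ae (ae_of_all _ fun X => ?_)
    simp only [hinv, Pi.add_apply, if_pos hv, if_neg hu, zero_add, add_sub_assoc]
  have h2 : ∫ X, f ‖X v - X u‖ * g X ∂(torusTreeM k d)
      = ∫ t : Torus d, ∫ X, f ‖t + (X v - X u)‖ * g X ∂(torusTreeM k d) := by
    simp_rw [← h1]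
    simp
  rw [h2, integral_integral_swap]
  · simp_rw [integral_mul_const]
    have h3 : ∀ z : Torus d, ∫ t : Torus d, f ‖t + z‖ = ∫ t : Torus d, f ‖t‖ := fun z =>
      integral_add_right_eq_self (μ := (volume : Measure (Torus d))) (fun t => f ‖t‖) z
    simp_rw [h3]
    rw [integral_const_mul]
  · refine Integrable.of_bound (C := C * D) ?_ (ae_of_all _ ?_)
    · refine Measurable.aestronglyMeasurable ?_
      refine Measurable.mul (hf.comp (Measurable.norm ?_)) (hg.comp measurable_snd)
      fun_prop
    · rintro ⟨t, X⟩
      simp only [Function.uncurry, norm_mul, Real.norm_eq_abs]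
      have := hC _ (torusTree_norm_le (t + (X v - X u)))
      exact mul_le_mul this (hD X) (abs_nonneg _) ((abs_nonneg _).trans this)

open scoped Classical in
/-- Lemma `treeedgesindependence`: if `T` is a tree and the `X_i`
are iid uniform points of the torus, then the random variables
`f_{ij}(‖X_i - X_j‖)`, for `(i,j)` ranging over the edges of `T`, have
expectation of product equal to product of expectations. -/
theorem torus_tree_edges_independence
    {k d : ℕ} (T : SimpleGraph (Fin k)) (hT : T.IsTree)
    (f : Fin k → Fin k → ℝ → ℝ)
    (hmeas : ∀ i j, Measurable (f i j))
    (hbdd : ∀ i j, ∃ C : ℝ, ∀ y ∈ Set.Icc (0:ℝ) (1/2), |f i j y| ≤ C) :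
    (∫ X : Fin k → Torus d,
        ∏ p ∈ Finset.univ.filter (fun p : Fin k × Fin k => p.1 < p.2 ∧ T.Adj p.1 p.2),
          f p.1 p.2 (dist (X p.1) (X p.2))
        ∂(Measure.pi fun _ => (volume : Measure (Torus d)))) =
      ∏ p ∈ Finset.univ.filter (fun p : Fin k × Fin k => p.1 < p.2 ∧ T.Adj p.1 p.2),
        ∫ X : Fin k → Torus d, f p.1 p.2 (dist (X p.1) (X p.2))
          ∂(Measure.pi fun _ => (volume : Measure (Torus d))) := by
  choose C hC using hbdd
  have main : ∀ S : Finset (Fin k × Fin k),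
      S ⊆ Finset.univ.filter (fun p : Fin k × Fin k => p.1 < p.2 ∧ T.Adj p.1 p.2) →
      (∫ X : Fin k → Torus d, ∏ p ∈ S, f p.1 p.2 (dist (X p.1) (X p.2)) ∂(torusTreeM k d)) =
      ∏ p ∈ S, ∫ X : Fin k → Torus d, f p.1 p.2 (dist (X p.1) (X p.2)) ∂(torusTreeM k d) := by
    intro S
    induction S using Finset.induction_on with
    | empty => simp
    | insert p S hp ih =>
      intro hS
      obtain ⟨hpS, hS'⟩ := Finset.insert_subset_iff.1 hS
      rw [Finset.prod_insert hp, ← ih hS']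
      simp_rw [Finset.prod_insert hp]
      simp only [Finset.mem_filter, Finset.mem_univ, true_and] at hpS
      have hbr := SimpleGraph.isAcyclic_iff_forall_adj_isBridge.1 hT.2 hpS.2
      rw [SimpleGraph.isBridge_iff] at hbr
      set G := T.deleteEdges {s(p.1, p.2)} with hG
      have hu : p.1 ∉ {w | G.Reachable p.2 w} := fun h => hbr (SimpleGraph.Reachable.symm h)
      have hv : p.2 ∈ {w | G.Reachable p.2 w} := SimpleGraph.Reachable.refl _
      have hb : ∀ (q : Fin k × Fin k) (X : Fin k → Torus d),
          |f q.1 q.2 (dist (X q.1) (X q.2))| ≤ C q.1 q.2 := fun q X => by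
        rw [dist_eq_norm]
        exact hC _ _ _ (torusTree_norm_le _)
      have e1 := torusTree_step p.1 p.2 {w | G.Reachable p.2 w} hv hu (f p.1 p.2) (hmeas _ _)
        (C p.1 p.2) (hC _ _) (fun X : Fin k → Torus d => ∏ q ∈ S, f q.1 q.2 (dist (X q.1) (X q.2)))
        (Finset.measurable_fun_prod _ fun q _ => (hmeas _ _).comp (by fun_prop))
        (∏ q ∈ S, C q.1 q.2)
        (fun X => by
          rw [Finset.abs_prod]
          exact Finset.prod_le_prod (fun _ _ => abs_nonneg _) (fun q _ => hb q X))
        (fun t X => by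
          refine Finset.prod_congr rfl fun q hq => ?_
          have hq' := hS' hq
          simp only [Finset.mem_filter, Finset.mem_univ, true_and] at hq'
          have hne : s(q.1, q.2) ≠ s(p.1, p.2) := by
            intro h
            rcases Sym2.eq_iff.1 h with ⟨a, b⟩ | ⟨a, b⟩
            · exact hp (by rwa [← Prod.ext a b])
            · have := hq'.1
              rw [a, b] at this
              exact absurd this (not_lt.2 hpS.1.le)
          have hadj : G.Adj q.1 q.2 := by
            rw [hG, SimpleGraph.deleteEdges_adj]
            exact ⟨hq'.2, fun h => hne h⟩
          have hiff : G.Reachable p.2 q.1 ↔ G.Reachable p.2 q.2 :=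
            ⟨fun h => h.trans hadj.reachable, fun h => h.trans hadj.symm.reachable⟩
          simp only [Pi.add_apply, Set.mem_ofPred_eq, hiff]
          by_cases h : G.Reachable p.2 q.2
          · simp only [if_pos h, dist_add_left]
          · simp only [if_neg h, zero_add])
      have e2 := torusTree_step p.1 p.2 {w | G.Reachable p.2 w} hv hu (f p.1 p.2) (hmeas _ _)
        (C p.1 p.2) (hC _ _) (fun _ : Fin k → Torus d => 1) measurable_const 1 (by simp)
        (fun _ _ => rfl)
      simp only [mul_one, integral_const, probReal_univ, smul_eq_mul] at e2
      rw [e1, e2]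
  exact main _ Finset.Subset.rfl

end
end
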